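/- arXiv:1101.1856 — 2 statements merged into one kernel-verified Lean document; each statement's English description precedes it below -/
import Mathlib

section
/- Let X be a one-dimensional Peano continuum. Then X is an absolute retract if and only if X is simply connected. -/
open Set

/-- Covering dimension at most `n`. -/
def CovDimLE (X : Type*) [TopologicalSpace X] (n : ℕ) : Prop :=
  ∀ U : Set (Set X), U.Finite → (∀ u ∈ U, IsOpen u) → ⋃₀ U = Set.univ →
    ∃ V : Set (Set X), V.Finite ∧ (∀ v ∈ V, IsOpen v) ∧ ⋃₀ V = Set.univ ∧
      (∀ v ∈ V, ∃ u ∈ U, v ⊆ u) ∧ ∀ x : X, {v ∈ V | x ∈ v}.ncard ≤ n + 1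

/-- Absolute retract. -/
def IsAR (X : Type*) [MetricSpace X] : Prop :=
  ∀ (Y : Type) [MetricSpace Y] (Z : Set Y), IsClosed Z →
    ∀ f : C(Z, X), ∃ g : C(Y, X), ∀ z : Z, g z = f z

/-!
An absolute retract is contractible, because a map given on the two ends of `[0, 1] × X` extends to
the cylinder. Conversely, let `X` be simply connected. A compact connected locally connected metric
space is locally path connected, so nonvanishing complex functions on `X` have continuous
logarithms. If `A` and `B` are closed and connected but `A ∩ B` is not, a partition of unity of
order two maps `X` to the boundary of a triangle in such a way that the logarithm changes
differently along `A` and along `B`; hence `X` is hereditarily unicoherent. In Urysohn's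
construction one can then keep all sublevel and superlevel sets connected, and the resulting
functions are monotone along the smallest continuum containing two points. Countably many of them
embed `X` in `ℝ^ℕ` with a metric which is additive along these continua. Its closed balls are
connected and satisfy the Helly property, so `X` is hyperconvex and thus a nonexpansive retract of
`ℝ^ℕ`, to which Tietze's theorem applies.
-/

open Filter Topology Metric

section LocalPathConnectedness

/-- Uniform local connectedness: points close to each other lie in a small connected set. -/
def UniformlyLocallyConnected (X : Type*) [PseudoMetricSpace X] : Prop :=
  ∀ ε > 0, ∃ δ > 0, ∀ x y : X, dist x y < δ →
    ∃ C : Set X, IsPreconnected C ∧ x ∈ C ∧ y ∈ C ∧ C ⊆ ball x ε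

theorem uniformlyLocallyConnected_of_compactSpace (X : Type*) [PseudoMetricSpace X]
    [CompactSpace X] [LocallyConnectedSpace X] : UniformlyLocallyConnected X := by
  intro ε hε
  obtain ⟨δ, hδ, hsub⟩ := lebesgue_number_lemma_of_metric (isCompact_univ (X := X))
    (c := fun z : X => connectedComponentIn (ball z (ε / 2)) z)
    (fun z => isOpen_ball.connectedComponentIn)
    (fun z _ => mem_iUnion.2 ⟨z, mem_connectedComponentIn (mem_ball_self (half_pos hε))⟩)
  refine ⟨δ, hδ, fun x y hxy => ?_⟩
  obtain ⟨z, hz⟩ := hsub x (mem_univ x)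
  have hx := hz (mem_ball_self hδ)
  refine ⟨_, isPreconnected_connectedComponentIn, hx, hz (mem_ball'.2 hxy), fun w hw => ?_⟩
  have hwz := mem_ball.1 (connectedComponentIn_subset _ _ hw)
  have hxz := mem_ball.1 (connectedComponentIn_subset _ _ hx)
  exact mem_ball.2 (by linarith [dist_triangle_right w x z])

variable {X : Type*} [PseudoMetricSpace X] {δ δ' a b c : ℝ} {x y z : X} {γ γ' : ℝ → X}

/-- A possibly discontinuous path from `x` to `y` over `[a, b]`, constant outside this interval,
all of whose jumps are smaller than `δ`. -/
structure IsApproxPath (δ a b : ℝ) (x y : X) (γ : ℝ → X) : Prop where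
  source : ∀ t ≤ a, γ t = x
  target : ∀ t, b ≤ t → γ t = y
  jump_lt : ∀ t, ∀ᶠ s in 𝓝 t, dist (γ s) (γ t) < δ

theorem IsApproxPath.trans (h : IsApproxPath δ a b x y γ) (h' : IsApproxPath δ b c y z γ')
    (hab : a ≤ b) (hbc : b ≤ c) :
    IsApproxPath δ a c x z (fun t => if t ≤ b then γ t else γ' t) where
  source t ht := by rw [if_pos (ht.trans hab), h.source t ht]
  target t ht := by
    split_ifs with htb
    · rw [h.target t (hbc.trans ht), ← h'.source t htb, h'.target t ht]
    · exact h'.target t ht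
  jump_lt t := by
    rcases lt_trichotomy t b with htb | rfl | htb
    · filter_upwards [h.jump_lt t, Iio_mem_nhds htb] with s hs hsb
      simpa only [if_pos htb.le, if_pos (mem_Iio.1 hsb).le] using hs
    · filter_upwards [h.jump_lt t, h'.jump_lt t] with s hs hs'
      rw [if_pos le_rfl]
      split_ifs
      · exact hs
      · rwa [h.target t le_rfl, ← h'.source t le_rfl]
    · filter_upwards [h'.jump_lt t, Ioi_mem_nhds htb] with s hs hsb
      simpa only [if_neg htb.not_ge, if_neg (mem_Ioi.1 hsb).not_ge] using hs

theorem IsApproxPath.mono (h : IsApproxPath δ a b x y γ) (hδ : δ ≤ δ') :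
    IsApproxPath δ' a b x y γ :=
  ⟨h.source, h.target, fun t => (h.jump_lt t).mono fun _ hs => hs.trans_le hδ⟩

theorem isApproxPath_const (hδ : 0 < δ) (a b : ℝ) (x : X) :
    IsApproxPath δ a b x x (fun _ => x) :=
  ⟨fun _ _ => rfl, fun _ _ => rfl, fun _ => .of_forall fun _ => by rwa [dist_self]⟩

theorem isApproxPath_step (hab : a < b) (hxy : dist x y < δ) :
    IsApproxPath δ a b x y (fun t => if t ≤ a then x else y) where
  source t ht := if_pos ht
  target t ht := if_neg (hab.trans_le ht).not_ge
  jump_lt t := .of_forall fun s => by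
    have hδ : 0 < δ := dist_nonneg.trans_lt hxy
    split_ifs
    · rwa [dist_self]
    · exact hxy
    · rwa [dist_comm]
    · rwa [dist_self]

theorem exists_isApproxPath_of_isPreconnected {C : Set X} (hC : IsPreconnected C) (hδ : 0 < δ)
    (hab : a < b) (hx : x ∈ C) (hy : y ∈ C) :
    ∃ γ, IsApproxPath δ a b x y γ ∧ ∀ t, γ t ∈ C := by
  let Joined (x y : X) := ∀ a b : ℝ, a < b → ∃ γ, IsApproxPath δ a b x y γ ∧ ∀ t, γ t ∈ C
  have joined_of_dist_lt {u v : X} (hu : u ∈ C) (hv : v ∈ C) (huv : dist u v < δ) :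
      Joined u v := fun a b hab =>
    ⟨_, isApproxPath_step hab huv, fun t => by split_ifs <;> assumption⟩
  refine hC.induction₂' Joined (fun u hu => ?_) (fun u v w _ _ _ huv hvw a b hab => ?_)
    hx hy a b hab
  · filter_upwards [self_mem_nhdsWithin, mem_nhdsWithin_of_mem_nhds (ball_mem_nhds u hδ)]
      with v hv hvu
    exact ⟨joined_of_dist_lt hu hv (mem_ball'.1 hvu), joined_of_dist_lt hv hu hvu⟩
  · obtain ⟨m, ham, hmb⟩ := exists_between hab
    obtain ⟨γ, hγ, hγC⟩ := huv a m ham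
    obtain ⟨γ', hγ', hγ'C⟩ := hvw m b hmb
    exact ⟨_, hγ.trans hγ' ham.le hmb.le, fun t => by
      split_ifs <;> simp only [hγC, hγ'C]⟩

/-- Over `[a, b]`, the function `γ` is uniformly `r`-close to an approximate path with jumps
smaller than `δ` and the same endpoints. -/
def HasRefinementOn (δ r : ℝ) (γ : ℝ → X) (a b : ℝ) : Prop :=
  ∃ γ', IsApproxPath δ a b (γ a) (γ b) γ' ∧ ∀ t ∈ Icc a b, dist (γ t) (γ' t) ≤ r

theorem HasRefinementOn.trans {r : ℝ} (h : HasRefinementOn δ r γ a b)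
    (h' : HasRefinementOn δ r γ b c) (hab : a ≤ b) (hbc : b ≤ c) :
    HasRefinementOn δ r γ a c := by
  obtain ⟨γ₁, hγ₁, hr₁⟩ := h
  obtain ⟨γ₂, hγ₂, hr₂⟩ := h'
  refine ⟨_, hγ₁.trans hγ₂ hab hbc, fun t ht => ?_⟩
  split_ifs with htb
  · exact hr₁ t ⟨ht.1, htb⟩
  · exact hr₂ t ⟨(not_le.1 htb).le, ht.2⟩

theorem hasRefinementOn_of_local {r : ℝ} (hab : a ≤ b)
    (h : ∀ t, ∃ u ∈ 𝓝 t, ∀ s s', s ≤ s' → Icc s s' ⊆ u → HasRefinementOn δ r γ s s') :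
    HasRefinementOn δ r γ a b := by
  choose u hu hloc using h
  obtain ⟨τ, h0, hmono, ⟨m, hm⟩, hsub⟩ := exists_monotone_Icc_subset_open_cover_Icc hab
    (c := fun t => Subtype.val ⁻¹' interior (u t))
    (fun t => isOpen_interior.preimage continuous_subtype_val)
    (fun t _ => mem_iUnion.2 ⟨t, mem_interior_iff_mem_nhds.2 (hu t)⟩)
  have hstep (n : ℕ) : HasRefinementOn δ r γ (τ n) (τ (n + 1)) := by
    obtain ⟨t, ht⟩ := hsub n
    have hle : τ n ≤ τ (n + 1) := hmono n.le_succ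
    have hIcc : Icc (τ n : ℝ) (τ (n + 1)) ⊆ u t := fun s hs => interior_subset
      (ht (show (⟨s, (τ n).2.1.trans hs.1, hs.2.trans (τ (n + 1)).2.2⟩ : Icc a b) ∈
        Icc (τ n) (τ (n + 1)) from hs))
    exact hloc t _ _ hle hIcc
  have hreach (n : ℕ) : HasRefinementOn δ r γ a (τ (n + 1)) := by
    induction n with
    | zero => simpa only [h0] using hstep 0
    | succ n ih => exact ih.trans (hstep _) (τ _).2.1 (hmono (n + 1).le_succ)
  simpa only [hm (m + 1) m.le_succ] using hreach m

theorem UniformlyLocallyConnected.exists_hasRefinementOn (hX : UniformlyLocallyConnected X)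
    {r : ℝ} (hr : 0 < r) : ∃ δ > 0, δ ≤ r ∧ ∀ {a b : ℝ} {γ : ℝ → X}, a ≤ b →
      (∀ t, ∀ᶠ s in 𝓝 t, dist (γ s) (γ t) < δ) → ∀ δ' > 0, HasRefinementOn δ' r γ a b := by
  obtain ⟨η, hη, hconn⟩ := hX (r / 2) (half_pos hr)
  refine ⟨min η r / 4, by positivity, by linarith [min_le_right η r], ?_⟩
  intro a b γ hab hγ δ' hδ'
  refine hasRefinementOn_of_local hab fun t => ⟨_, hγ t, fun s s' hss' hsub => ?_⟩
  have hclose {p q : ℝ} (hp : p ∈ Icc s s') (hq : q ∈ Icc s s') :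
      dist (γ p) (γ q) < min η r / 2 := by
    have h₁ : dist (γ p) (γ t) < min η r / 4 := hsub hp
    have h₂ : dist (γ q) (γ t) < min η r / 4 := hsub hq
    linarith [dist_triangle_right (γ p) (γ q) (γ t)]
  have hs_mem := left_mem_Icc.2 hss'
  obtain rfl | hlt := hss'.eq_or_lt
  · refine ⟨_, isApproxPath_const hδ' s s (γ s), fun p hp => ?_⟩
    linarith [hclose hp hs_mem, min_le_right η r]
  obtain ⟨C, hC, hsC, hs'C, hCr⟩ := hconn (γ s) (γ s') <| by
    linarith [hclose hs_mem (right_mem_Icc.2 hss'), min_le_left η r,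
      dist_nonneg (x := γ s) (y := γ s')]
  obtain ⟨γ', hγ', hγ'C⟩ := exists_isApproxPath_of_isPreconnected hC hδ' hlt hsC hs'C
  refine ⟨γ', hγ', fun p hp => ?_⟩
  have hfar : dist (γ' p) (γ s) < r / 2 := hCr (hγ'C p)
  linarith [hclose hp hs_mem, dist_triangle_right (γ p) (γ' p) (γ s), min_le_right η r]

theorem continuous_of_approx_of_jump_lt {α : Type*} [TopologicalSpace α] {g : α → X}
    (h : ∀ ε > 0, ∃ f : α → X, (∀ t, dist (f t) (g t) ≤ ε) ∧
      ∀ t, ∀ᶠ s in 𝓝 t, dist (f s) (f t) < ε) : Continuous g := by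
  refine continuous_iff_continuousAt.2 fun t => Metric.tendsto_nhds.2 fun ε hε => ?_
  obtain ⟨f, hfg, hjump⟩ := h (ε / 3) (by positivity)
  filter_upwards [hjump t] with s hs
  have := dist_triangle4_left (f s) (f t) (g s) (g t)
  have := dist_triangle4 (g s) (f s) (f t) (g t)
  rw [dist_comm (g s)] at this
  linarith [hfg s, hfg t]

theorem IsApproxPath.exists_refinement {r : ℝ} (h : IsApproxPath δ a b x y γ)
    (href : HasRefinementOn δ' r γ a b) (hr : 0 ≤ r) :
    ∃ γ', IsApproxPath δ' a b x y γ' ∧ ∀ t, dist (γ t) (γ' t) ≤ r := by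
  obtain ⟨γ', hγ', hdist⟩ := href
  rw [h.source a le_rfl, h.target b le_rfl] at hγ'
  refine ⟨γ', hγ', fun t => ?_⟩
  rcases le_total t a with hta | hta
  · rwa [h.source t hta, hγ'.source t hta, dist_self]
  rcases le_total t b with htb | htb
  · exact hdist t ⟨hta, htb⟩
  · rwa [h.target t htb, hγ'.target t htb, dist_self]

theorem UniformlyLocallyConnected.exists_approxPath_seq (hX : UniformlyLocallyConnected X)
    {r : ℝ} (hr : 0 < r) : ∃ δ > 0, ∀ x y : X, dist x y < δ → ∃ γ : ℕ → ℝ → X,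
      (∀ k, IsApproxPath (r / 2 / 2 ^ k) 0 1 x y (γ k)) ∧
      (∀ k t, dist (γ k t) (γ (k + 1) t) ≤ r / 2 / 2 ^ k) ∧ ∀ t, dist (γ 0 t) x < r := by
  have hpos (k : ℕ) : 0 < r / 2 / 2 ^ k := by positivity
  choose δ hδ hδr hrefine using fun k => hX.exists_hasRefinementOn (hpos k)
  refine ⟨δ 0, hδ 0, fun x y hxy => ?_⟩
  choose next hnext using fun (k : ℕ) (γ : {γ : ℝ → X // IsApproxPath (δ k) 0 1 x y γ}) =>
    γ.2.exists_refinement (hrefine k zero_le_one γ.2.jump_lt (δ (k + 1)) (hδ (k + 1))) (hpos k).le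
  let γ (k : ℕ) : {γ : ℝ → X // IsApproxPath (δ k) 0 1 x y γ} :=
    Nat.rec ⟨_, isApproxPath_step one_pos hxy⟩ (fun k γ => ⟨next k γ, (hnext k γ).1⟩) k
  refine ⟨fun k => (γ k).1, fun k => (γ k).2.mono (hδr k), fun k => (hnext k (γ k)).2, fun t => ?_⟩
  have hδ0 : δ 0 < r := (hδr 0).trans_lt (by rw [pow_zero, div_one]; exact half_lt_self hr)
  change dist (if t ≤ 0 then x else y) x < r
  split_ifs
  · rwa [dist_self]
  · exact (dist_comm y x).trans_lt (hxy.trans hδ0)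

theorem exists_continuous_of_approxPath_seq {X : Type*} [MetricSpace X] [CompleteSpace X]
    {x y : X} {a b r : ℝ} {γ : ℕ → ℝ → X} (hr : 0 < r)
    (hγ : ∀ k, IsApproxPath (r / 2 / 2 ^ k) a b x y (γ k))
    (hdist : ∀ k t, dist (γ k t) (γ (k + 1) t) ≤ r / 2 / 2 ^ k) :
    ∃ g : ℝ → X, Continuous g ∧ g a = x ∧ g b = y ∧ ∀ t, dist (γ 0 t) (g t) ≤ r := by
  choose g hg using fun t =>
    cauchySeq_tendsto_of_complete (cauchySeq_of_le_geometric_two fun k => hdist k t)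
  have hγg (t : ℝ) (k : ℕ) : dist (γ k t) (g t) ≤ r / 2 ^ k :=
    dist_le_of_le_geometric_two_of_tendsto (fun k => hdist k t) (hg t) k
  refine ⟨g, continuous_of_approx_of_jump_lt fun ε hε => ?_, ?_, ?_, fun t => ?_⟩
  · obtain ⟨k, hk⟩ := exists_pow_lt_of_lt_one (div_pos hε hr) (one_half_lt_one (α := ℝ))
    have hk' : r / 2 ^ k < ε := by
      rwa [lt_div_iff₀ hr, one_div, inv_pow, inv_mul_eq_div] at hk
    refine ⟨γ k, fun t => (hγg t k).trans hk'.le, fun t => ?_⟩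
    filter_upwards [(hγ k).jump_lt t] with s hs
    rw [div_right_comm] at hs
    exact hs.trans ((half_lt_self (by positivity)).trans hk')
  · exact tendsto_nhds_unique (hg a) (by simp only [(hγ _).source a le_rfl, tendsto_const_nhds])
  · exact tendsto_nhds_unique (hg b) (by simp only [(hγ _).target b le_rfl, tendsto_const_nhds])
  · simpa only [pow_zero, div_one] using hγg t 0

theorem UniformlyLocallyConnected.locallyPathConnectedSpace {X : Type*} [MetricSpace X]
    [CompleteSpace X] (hX : UniformlyLocallyConnected X) : LocallyPathConnectedSpace X := by
  refine locallyPathConnectedSpace_iff_pathComponentIn_mem_nhds.2 fun x u hu hx => ?_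
  obtain ⟨ε, hε, hball⟩ := Metric.isOpen_iff.1 hu x hx
  have hr : 0 < ε / 2 := half_pos hε
  obtain ⟨δ, hδ, hseq⟩ := hX.exists_approxPath_seq hr
  filter_upwards [ball_mem_nhds x hδ] with y hy
  obtain ⟨γ, hγ, hdist, hstart⟩ := hseq x y (mem_ball'.1 hy)
  obtain ⟨g, hg, hgx, hgy, hγg⟩ := exists_continuous_of_approxPath_seq hr hγ hdist
  refine JoinedIn.ofLine hg.continuousOn hgx hgy ?_
  rintro _ ⟨t, -, rfl⟩
  exact hball (mem_ball.2 (by linarith [hstart t, hγg t, dist_triangle_left (g t) x (γ 0 t)]))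

end LocalPathConnectedness

section Unicoherence

variable {X : Type*} [TopologicalSpace X]

theorem CovDimLE.exists_shrinking {n : ℕ} (h : CovDimLE X n) {ι : Type*} [Finite ι]
    {U : ι → Set X} (hU : ∀ i, IsOpen (U i)) (hcov : ⋃ i, U i = univ) :
    ∃ W : ι → Set X, (∀ i, IsOpen (W i)) ∧ ⋃ i, W i = univ ∧ (∀ i, W i ⊆ U i) ∧
      ∀ x, {i | x ∈ W i}.ncard ≤ n + 1 := by
  obtain ⟨V, hVfin, hVopen, hVcov, hVU, hVord⟩ :=
    h (range U) (finite_range U) (forall_mem_range.2 hU) (by rwa [sUnion_range])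
  rcases isEmpty_or_nonempty ι with hι | hι
  · exact ⟨U, hU, hcov, fun _ => Subset.rfl, fun x => by simp [eq_empty_of_isEmpty]⟩
  choose! c hc using fun v hv => exists_range_iff.1 (hVU v hv)
  refine ⟨fun i => ⋃₀ {v ∈ V | c v = i}, fun i => isOpen_sUnion fun v hv => hVopen v hv.1,
    eq_univ_of_forall fun x => ?_, fun i => sUnion_subset ?_, fun x => ?_⟩
  · obtain ⟨v, hv, hxv⟩ := hVcov.ge (mem_univ x)
    exact mem_iUnion.2 ⟨c v, v, ⟨hv, rfl⟩, hxv⟩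
  · rintro v ⟨hv, rfl⟩
    exact hc v hv
  · have hsub : {i | x ∈ ⋃₀ {v ∈ V | c v = i}} ⊆ c '' {v ∈ V | x ∈ v} := by
      rintro _ ⟨v, ⟨hv, rfl⟩, hxv⟩
      exact ⟨v, ⟨hv, hxv⟩, rfl⟩
    have hfin : {v ∈ V | x ∈ v}.Finite := hVfin.subset (sep_subset _ _)
    exact (ncard_le_ncard hsub (hfin.image c)).trans ((ncard_image_le hfin).trans (hVord x))

theorem CovDimLE.exists_partitionOfUnity [NormalSpace X] {n : ℕ} (h : CovDimLE X n)
    {ι : Type*} [Finite ι] {U : ι → Set X} (hU : ∀ i, IsOpen (U i)) (hcov : ⋃ i, U i = univ) :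
    ∃ f : PartitionOfUnity ι X, f.IsSubordinate U ∧ ∀ x, {i | f i x ≠ 0}.ncard ≤ n + 1 := by
  obtain ⟨W, hWopen, hWcov, hWU, hWord⟩ := h.exists_shrinking hU hcov
  obtain ⟨f, hf⟩ := PartitionOfUnity.exists_isSubordinate_of_locallyFinite isClosed_univ W hWopen
    (locallyFinite_of_finite W) hWcov.ge
  refine ⟨f, fun i => (hf i).trans (hWU i), fun x => (ncard_le_ncard ?_).trans (hWord x)⟩
  exact fun i hi => hf i (subset_tsupport _ hi)

/-- The boundary of a triangle is embedded in the plane as the set of points `(a - c, b - c)` with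
barycentric coordinates `a`, `b`, `c`, one of which vanishes; it winds around the origin. -/
theorem CovDimLE.exists_triangle_map [NormalSpace X] (h : CovDimLE X 1) {P Q R : Set X}
    (hP : IsClosed P) (hQ : IsClosed Q) (hR : IsClosed R) (hPQR : P ∩ Q ∩ R = ∅) :
    ∃ G : C(X, ℂ), (∀ x, G x ≠ 0) ∧ (∀ x ∈ P, (G x).re ≤ 0 ∧ (G x).re ≤ (G x).im) ∧
      (∀ x ∈ Q, (G x).im ≤ 0 ∧ (G x).im ≤ (G x).re) ∧ ∀ x ∈ R, 0 ≤ (G x).re ∧ 0 ≤ (G x).im := by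
  obtain ⟨f, hf, hord⟩ := h.exists_partitionOfUnity (U := ![Pᶜ, Qᶜ, Rᶜ])
    (by simp only [Fin.forall_fin_succ]; simp [hP, hQ, hR]) <| by
      refine eq_univ_of_forall fun x => mem_iUnion.2 ?_
      by_contra! hx
      exact hPQR.le ⟨⟨not_notMem.1 (hx 0), not_notMem.1 (hx 1)⟩, not_notMem.1 (hx 2)⟩
  have hzero {i : Fin 3} {x : X} (hx : x ∉ (![Pᶜ, Qᶜ, Rᶜ] : Fin 3 → Set X) i) : f i x = 0 :=
    by_contra fun hne => hx (hf i (subset_tsupport _ hne))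
  have hP0 : ∀ x ∈ P, f 0 x = 0 := fun x hx => hzero (not_not_intro hx)
  have hQ0 : ∀ x ∈ Q, f 1 x = 0 := fun x hx => hzero (not_not_intro hx)
  have hR0 : ∀ x ∈ R, f 2 x = 0 := fun x hx => hzero (not_not_intro hx)
  have hsum (x : X) : f 0 x + f 1 x + f 2 x = 1 := by
    rw [← f.sum_eq_one (mem_univ x), finsum_eq_sum_of_fintype, Fin.sum_univ_three]
  have hvanish (x : X) : ∃ i, f i x = 0 := by
    by_contra! hne
    have := hord x
    rw [show {i | f i x ≠ 0} = univ from eq_univ_of_forall hne, ncard_univ, Nat.card_fin] at this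
    omega
  refine ⟨⟨fun x => ⟨f 0 x - f 2 x, f 1 x - f 2 x⟩, ?_⟩, fun x hx => ?_,
    fun x hx => ?_, fun x hx => ?_, fun x hx => ?_⟩
  · exact Complex.equivRealProdCLM.symm.continuous.comp
      (((f 0).continuous.sub (f 2).continuous).prodMk ((f 1).continuous.sub (f 2).continuous))
  · have hre : f 0 x - f 2 x = 0 := congrArg Complex.re hx
    have him : f 1 x - f 2 x = 0 := congrArg Complex.im hx
    obtain ⟨i, hi⟩ := hvanish x
    fin_cases i <;> simp only [Fin.reduceFinMk] at hi <;> linarith [hsum x]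
  · change f 0 x - f 2 x ≤ 0 ∧ f 0 x - f 2 x ≤ f 1 x - f 2 x
    simp [hP0 x hx, f.nonneg]
  · change f 1 x - f 2 x ≤ 0 ∧ f 1 x - f 2 x ≤ f 0 x - f 2 x
    simp [hQ0 x hx, f.nonneg]
  · change 0 ≤ f 0 x - f 2 x ∧ 0 ≤ f 1 x - f 2 x
    simp [hR0 x hx, f.nonneg]

theorem exists_continuousMap_exp_eq [SimplyConnectedSpace X] [LocallyPathConnectedSpace X]
    (G : C(X, ℂ)) (hG : ∀ x, G x ≠ 0) : ∃ L : C(X, ℂ), ∀ x, Complex.exp (L x) = G x := by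
  obtain ⟨p⟩ : Nonempty X := inferInstance
  obtain ⟨L, ⟨-, hL⟩, -⟩ := Complex.isCoveringMapOn_exp.existsUnique_continuousMap_lifts G
    (a₀ := p) (Complex.exp_log (hG p)) hG
  exact ⟨L, congrFun hL⟩

theorem im_sub_im_eq_arg_exp_sub_arg_exp {A : Set X} (hA : IsPreconnected A) {L : X → ℂ}
    (hL : ContinuousOn L A) (hslit : ∀ x ∈ A, Complex.exp (L x) ∈ Complex.slitPlane) {p q : X}
    (hp : p ∈ A) (hq : q ∈ A) :
    (L q).im - (L p).im = (Complex.exp (L q)).arg - (Complex.exp (L p)).arg := by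
  have hcont : ContinuousOn (fun x => (L x - Complex.log (Complex.exp (L x))) /
      (2 * Real.pi * Complex.I)) A :=
    (hL.sub (hL.cexp.clog hslit)).div_const _
  have hint (x : X) : (L x - Complex.log (Complex.exp (L x))) / (2 * Real.pi * Complex.I) ∈
      range ((↑) : ℤ → ℂ) :=
    ⟨toIocDiv Real.two_pi_pos (-Real.pi) (L x).im, by
      rw [Complex.log_exp_eq_sub_toIocDiv, sub_sub_cancel,
        mul_div_cancel_right₀ _ Complex.two_pi_I_ne_zero]⟩
  have hdiscrete : IsDiscrete (range ((↑) : ℤ → ℂ)) :=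
    (Complex.isometry_ofReal.isEmbedding.comp
      Int.isClosedEmbedding_coe_real.isEmbedding).isInducing.isDiscrete_range
  have heq := hA.constant_of_mapsTo hdiscrete hcont (fun x _ => hint x) hp hq
  rw [div_left_inj' Complex.two_pi_I_ne_zero] at heq
  have him := congrArg Complex.im heq
  simp only [Complex.sub_im, Complex.log_im] at him
  linarith

theorem mem_slitPlane_of_re_nonneg {z : ℂ} (hz : z ≠ 0) (hre : 0 ≤ z.re) :
    z ∈ Complex.slitPlane := by
  rw [Complex.mem_slitPlane_iff]
  by_contra! h
  exact hz (Complex.ext (h.1.antisymm hre) h.2)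

/-- The rotation by `-1 + I` sends the two half-planes around the other sides of the triangle into
the slit plane. -/
theorem rotate_mem_slitPlane {z : ℂ} (hz : z ≠ 0) (h : z.re ≤ 0 ∨ z.im ≤ 0) :
    (-1 + Complex.I) * z ∈ Complex.slitPlane := by
  rw [Complex.mem_slitPlane_iff]
  by_contra! h'
  simp only [Complex.mul_re, Complex.mul_im, Complex.add_re, Complex.add_im, Complex.neg_re,
    Complex.neg_im, Complex.one_re, Complex.one_im, Complex.I_re, Complex.I_im] at h'
  exact hz (Complex.ext (by rw [Complex.zero_re]; rcases h with h | h <;> linarith)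
    (by rw [Complex.zero_im]; rcases h with h | h <;> linarith))

theorem arg_rotate_sub_arg_rotate_lt {z z' : ℂ} (hre : 0 ≤ z.re) (him : z.im = 0)
    (hz' : z' ≠ 0) (hre' : z'.re = 0) (him' : 0 ≤ z'.im) :
    ((-1 + Complex.I) * z').arg - ((-1 + Complex.I) * z).arg < z'.arg - z.arg := by
  have hargz : z.arg = 0 := Complex.arg_eq_zero_iff.2 ⟨hre, him⟩
  have hargz' : 0 ≤ z'.arg := Complex.arg_nonneg_iff.2 him'
  have hrot : 0 ≤ ((-1 + Complex.I) * z).arg :=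
    Complex.arg_nonneg_iff.2 (by simpa [him] using hre)
  have hrot' : ((-1 + Complex.I) * z').arg < 0 :=
    Complex.arg_neg_iff.2 (by simpa [hre'] using him'.lt_of_ne' fun h => hz' (Complex.ext hre' h))
  linarith

/-- Hereditary unicoherence: any two closed connected sets have a connected, possibly empty,
intersection. -/
def HereditarilyUnicoherent (X : Type*) [TopologicalSpace X] : Prop :=
  ∀ A B : Set X, IsClosed A → IsPreconnected A → IsClosed B → IsPreconnected B →
    IsPreconnected (A ∩ B)

/-- From `p` to `q`, the argument of the triangle map grows by `π / 2` along `A`, but drops by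
`3 * π / 2` along `B`. -/
theorem not_separated_inter [NormalSpace X] [SimplyConnectedSpace X]
    [LocallyPathConnectedSpace X] (hdim : CovDimLE X 1) {A B O O' : Set X}
    (hAc : IsClosed A) (hA : IsPreconnected A) (hBc : IsClosed B) (hB : IsPreconnected B)
    (hO : IsOpen O) (hO' : IsOpen O') (hOO' : Disjoint O O') (hcov : A ∩ B ⊆ O ∪ O')
    {p q : X} (hp : p ∈ A ∩ B ∩ O) (hq : q ∈ A ∩ B ∩ O') : False := by
  obtain ⟨G, hG0, hGP, hGQ, hGA⟩ :=
    hdim.exists_triangle_map (hBc.sdiff hO) (hBc.sdiff hO') hAc <| by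
      rw [eq_empty_iff_forall_notMem]
      rintro x ⟨⟨⟨hxB, hxO⟩, -, hxO'⟩, hxA⟩
      exact (hcov ⟨hxA, hxB⟩).elim hxO hxO'
  obtain ⟨L, hL⟩ := exists_continuousMap_exp_eq G hG0
  let w : ℂ := -1 + Complex.I
  have hw : w ≠ 0 := fun h => by simpa [w] using congrArg Complex.im h
  have hLw (x : X) : Complex.exp (Complex.log w + L x) = w * G x := by
    rw [Complex.exp_add, Complex.exp_log hw, hL]
  have hslitB : ∀ x ∈ B, w * G x ∈ Complex.slitPlane := fun x hx =>
    rotate_mem_slitPlane (hG0 x) <| by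
      by_cases hxO : x ∈ O
      · exact .inr (hGQ x ⟨hx, disjoint_left.1 hOO' hxO⟩).1
      · exact .inl (hGP x ⟨hx, hxO⟩).1
  have hangleA := im_sub_im_eq_arg_exp_sub_arg_exp hA L.continuous.continuousOn (fun x hx => by
    rw [hL]; exact mem_slitPlane_of_re_nonneg (hG0 x) (hGA x hx).1) hp.1.1 hq.1.1
  have hangleB := im_sub_im_eq_arg_exp_sub_arg_exp hB (L := fun x => Complex.log w + L x)
    (by fun_prop) (by simpa only [hLw] using hslitB) hp.1.2 hq.1.2
  simp only [hL, hLw, Complex.add_im] at hangleA hangleB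
  have hGp := hGQ p ⟨hp.1.2, disjoint_left.1 hOO' hp.2⟩
  have hGq := hGP q ⟨hq.1.2, disjoint_right.1 hOO' hq.2⟩
  have hGpA := hGA p hp.1.1
  have hGqA := hGA q hq.1.1
  have hlt := arg_rotate_sub_arg_rotate_lt hGpA.1 (hGp.1.antisymm hGpA.2) (hG0 q)
    (hGq.1.antisymm hGqA.1) hGqA.2
  linarith

theorem hereditarilyUnicoherent_of_simplyConnectedSpace [NormalSpace X] [SimplyConnectedSpace X]
    [LocallyPathConnectedSpace X] (hdim : CovDimLE X 1) : HereditarilyUnicoherent X := by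
  intro A B hAc hA hBc hB
  rw [isPreconnected_closed_iff]
  rintro S T hS hT hcov ⟨p, hp, hpS⟩ ⟨q, hq, hqT⟩
  by_contra hdisj
  have hAB := hAc.inter hBc
  obtain ⟨O, O', hO, hO', hSO, hTO', hOO'⟩ := normal_separation (hAB.inter hS) (hAB.inter hT) <| by
    rwa [disjoint_iff_inter_eq_empty, ← inter_inter_distrib_left, ← not_nonempty_iff_eq_empty]
  exact not_separated_inter hdim hAc hA hBc hB hO hO' hOO'
    (fun x hx => (hcov hx).imp (fun h => hSO ⟨hx, h⟩) fun h => hTO' ⟨hx, h⟩)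
    ⟨hp, hSO ⟨hp, hpS⟩⟩ ⟨hq, hTO' ⟨hq, hqT⟩⟩

end Unicoherence

section ContinuumHull

variable {X : Type*} [TopologicalSpace X]

namespace HereditarilyUnicoherent

theorem inter_inter_nonempty (hX : HereditarilyUnicoherent X) {A B C : Set X}
    (hAc : IsClosed A) (hA : IsPreconnected A) (hBc : IsClosed B) (hB : IsPreconnected B)
    (hCc : IsClosed C) (hC : IsPreconnected C) (hAB : (A ∩ B).Nonempty)
    (hAC : (A ∩ C).Nonempty) (hBC : (B ∩ C).Nonempty) : (A ∩ B ∩ C).Nonempty := by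
  have hABC : IsPreconnected ((A ∪ B) ∩ C) :=
    hX _ _ (hAc.union hBc) (hA.union' hAB hB) hCc hC
  obtain ⟨x, ⟨-, hxC⟩, hxAB⟩ := isPreconnected_closed_iff.1 hABC A B hAc hBc inter_subset_left
    (hAC.mono fun x hx => ⟨⟨.inl hx.1, hx.2⟩, hx.1⟩)
    (hBC.mono fun x hx => ⟨⟨.inr hx.1, hx.2⟩, hx.1⟩)
  exact ⟨x, hxAB, hxC⟩

variable {ι : Type*} {F : ι → Set X}

theorem inter_biInter_nonempty (hX : HereditarilyUnicoherent X) (hFc : ∀ i, IsClosed (F i))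
    (hF : ∀ i, IsPreconnected (F i)) (hmeet : ∀ i j, (F i ∩ F j).Nonempty) (s : Finset ι)
    {K : Set X} (hKc : IsClosed K) (hK : IsPreconnected K) (hne : K.Nonempty)
    (hKF : ∀ i, (K ∩ F i).Nonempty) : (K ∩ ⋂ i ∈ s, F i).Nonempty := by
  classical
  induction s using Finset.induction_on generalizing K with
  | empty => simpa using hne
  | insert a s _ ih =>
    rw [Finset.set_biInter_insert, ← inter_assoc]
    exact ih (hKc.inter (hFc a)) (hX _ _ hKc hK (hFc a) (hF a)) (hKF a) fun i =>
      hX.inter_inter_nonempty hKc hK (hFc a) (hF a) (hFc i) (hF i) (hKF a) (hKF i) (hmeet a i)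

theorem iInter_nonempty [CompactSpace X] [ConnectedSpace X] (hX : HereditarilyUnicoherent X)
    (hFc : ∀ i, IsClosed (F i)) (hF : ∀ i, IsPreconnected (F i))
    (hmeet : ∀ i j, (F i ∩ F j).Nonempty) : (⋂ i, F i).Nonempty := by
  rw [← univ_inter (⋂ i, F i)]
  exact isCompact_univ.inter_iInter_nonempty F hFc fun s =>
    hX.inter_biInter_nonempty hFc hF hmeet s isClosed_univ isPreconnected_univ univ_nonempty
      fun i => by simpa only [univ_inter, inter_self] using hmeet i i

end HereditarilyUnicoherent

theorem isPreconnected_iInter_of_directed [CompactSpace X] [NormalSpace X] {ι : Type*}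
    [Nonempty ι] {F : ι → Set X} (hdir : Directed (· ⊇ ·) F) (hFc : ∀ i, IsClosed (F i))
    (hF : ∀ i, IsPreconnected (F i)) : IsPreconnected (⋂ i, F i) := by
  rw [isPreconnected_closed_iff]
  rintro S T hS hT hcov ⟨p, hp, hpS⟩ ⟨q, hq, hqT⟩
  by_contra hdisj
  have hclosed := isClosed_iInter hFc
  obtain ⟨O, O', hO, hO', hSO, hTO', hOO'⟩ :=
    normal_separation (hclosed.inter hS) (hclosed.inter hT) <| by
      rwa [disjoint_iff_inter_eq_empty, ← inter_inter_distrib_left, ← not_nonempty_iff_eq_empty]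
  obtain ⟨i, hi⟩ : ∃ i, F i ⊆ O ∪ O' :=
    exists_subset_nhds_of_compactSpace hdir hFc fun x hx => (hO.union hO').mem_nhds <|
      (hcov hx).imp (fun h => hSO ⟨hx, h⟩) fun h => hTO' ⟨hx, h⟩
  obtain ⟨z, -, hz, hz'⟩ := hF i O O' hO hO' hi ⟨p, mem_iInter.1 hp i, hSO ⟨hp, hpS⟩⟩
    ⟨q, mem_iInter.1 hq i, hTO' ⟨hq, hqT⟩⟩
  exact disjoint_left.1 hOO' hz hz'

/-- The intersection of all closed connected sets containing `x` and `y`; in a dendrite this is the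
arc from `x` to `y`. -/
def continuumHull (x y : X) : Set X :=
  ⋂ S : {S : Set X // IsClosed S ∧ IsPreconnected S ∧ x ∈ S ∧ y ∈ S}, S

theorem continuumHull_subset {x y : X} {S : Set X} (hSc : IsClosed S) (hS : IsPreconnected S)
    (hx : x ∈ S) (hy : y ∈ S) : continuumHull x y ⊆ S :=
  iInter_subset_of_subset ⟨S, hSc, hS, hx, hy⟩ Subset.rfl

theorem left_mem_continuumHull (x y : X) : x ∈ continuumHull x y :=
  mem_iInter.2 fun S => S.2.2.2.1

theorem right_mem_continuumHull (x y : X) : y ∈ continuumHull x y :=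
  mem_iInter.2 fun S => S.2.2.2.2

theorem HereditarilyUnicoherent.isPreconnected_continuumHull [CompactSpace X] [NormalSpace X]
    [PreconnectedSpace X] (hX : HereditarilyUnicoherent X) (x y : X) :
    IsPreconnected (continuumHull x y) := by
  have : Nonempty {S : Set X // IsClosed S ∧ IsPreconnected S ∧ x ∈ S ∧ y ∈ S} :=
    ⟨univ, isClosed_univ, isPreconnected_univ, mem_univ x, mem_univ y⟩
  refine isPreconnected_iInter_of_directed ?_ (fun S => S.2.1) fun S => S.2.2.1
  rintro ⟨S, hSc, hS, hxS, hyS⟩ ⟨T, hTc, hT, hxT, hyT⟩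
  exact ⟨⟨S ∩ T, hSc.inter hTc, hX S T hSc hS hTc hT, ⟨hxS, hxT⟩, hyS, hyT⟩,
    inter_subset_left, inter_subset_right⟩

end ContinuumHull

section MonotoneFunctions

variable {X : Type*} [TopologicalSpace X]

theorem inter_closure_connectedComponentIn_compl_nonempty [PreconnectedSpace X]
    [LocallyConnectedSpace X] {D : Set X} (hDc : IsClosed D) (hD : D.Nonempty) {x : X}
    (hx : x ∉ D) : (D ∩ closure (connectedComponentIn Dᶜ x)).Nonempty := by
  by_contra hdisj
  set V := connectedComponentIn Dᶜ x
  have hxV : x ∈ V := mem_connectedComponentIn hx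
  have hclosure : closure V ⊆ V :=
    isPreconnected_connectedComponentIn.closure.subset_connectedComponentIn (subset_closure hxV)
      fun z hz hzD => hdisj ⟨z, hzD, hz⟩
  have hclopen : IsClopen V :=
    ⟨isClosed_of_closure_subset hclosure, hDc.isOpen_compl.connectedComponentIn⟩
  obtain ⟨d, hd⟩ := hD
  exact connectedComponentIn_subset Dᶜ x (hclopen.eq_univ ⟨x, hxV⟩ ▸ mem_univ d : d ∈ V) hd

theorem isConnected_compl_connectedComponentIn_compl [PreconnectedSpace X]
    [LocallyConnectedSpace X] {D : Set X} (hDc : IsClosed D) (hD : IsConnected D) (a : X) :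
    IsConnected (connectedComponentIn Dᶜ a)ᶜ := by
  obtain ⟨d, hd⟩ := hD.nonempty
  have hDW : D ⊆ (connectedComponentIn Dᶜ a)ᶜ := fun z hz h => connectedComponentIn_subset _ _ h hz
  refine ⟨⟨d, hDW hd⟩, isPreconnected_of_forall d fun x hx => ?_⟩
  by_cases hxD : x ∈ D
  · exact ⟨D, hDW, hd, hxD, hD.isPreconnected⟩
  have hdisj : Disjoint (connectedComponentIn Dᶜ x) (connectedComponentIn Dᶜ a) := by
    refine disjoint_left.2 fun z hzx hza => hx ?_
    rw [connectedComponentIn_eq hza, ← connectedComponentIn_eq hzx]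
    exact mem_connectedComponentIn hxD
  have hclosure : closure (connectedComponentIn Dᶜ x) ⊆ (connectedComponentIn Dᶜ a)ᶜ :=
    closure_minimal (disjoint_left.1 hdisj) hDc.isOpen_compl.connectedComponentIn.isClosed_compl
  exact ⟨D ∪ closure (connectedComponentIn Dᶜ x), union_subset hDW hclosure, .inl hd,
    .inr (subset_closure (mem_connectedComponentIn hxD)),
    hD.isPreconnected.union'
      (inter_closure_connectedComponentIn_compl_nonempty hDc ⟨d, hd⟩ hxD)
      isPreconnected_connectedComponentIn.closure⟩

theorem exists_open_between_isConnected [NormalSpace X] [PreconnectedSpace X]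
    [LocallyConnectedSpace X] {C U : Set X} (hCc : IsClosed C) (hC : IsConnected C)
    (hUo : IsOpen U) (hU : IsConnected Uᶜ) (hCU : C ⊆ U) :
    ∃ W, IsOpen W ∧ C ⊆ W ∧ closure W ⊆ U ∧ IsConnected Wᶜ ∧ IsConnected (closure W) := by
  obtain ⟨a, ha⟩ := hC.nonempty
  obtain ⟨b, hb⟩ := hU.nonempty
  obtain ⟨O, hO, hUO, hOC⟩ := normal_exists_closure_subset hUo.isClosed_compl hCc.isOpen_compl
    (compl_subset_compl.2 hCU)
  let N := connectedComponentIn O b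
  have hN : IsConnected N := isConnected_connectedComponentIn_iff.2 (hUO hb)
  have hUN : Uᶜ ⊆ N := hU.isPreconnected.subset_connectedComponentIn hb hUO
  have hCN : C ⊆ (closure N)ᶜ :=
    subset_compl_comm.1 ((closure_mono (connectedComponentIn_subset _ _)).trans hOC)
  let W := connectedComponentIn (closure N)ᶜ a
  have hWN : W ⊆ Nᶜ :=
    (connectedComponentIn_subset _ _).trans (compl_subset_compl.2 subset_closure)
  exact ⟨W, isClosed_closure.isOpen_compl.connectedComponentIn,
    hC.isPreconnected.subset_connectedComponentIn ha hCN,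
    (closure_minimal hWN hO.connectedComponentIn.isClosed_compl).trans (compl_subset_comm.1 hUN),
    isConnected_compl_connectedComponentIn_compl isClosed_closure hN.closure a,
    (isConnected_connectedComponentIn_iff.2 (hCN ha)).closure⟩

/-- A real function on `X` is hull-monotone if on the hull of any two points it takes values between
those at the two points. This makes `|f x - f y|` additive along hulls. -/
def HullMonotone (f : X → ℝ) : Prop :=
  ∀ x y, ∀ z ∈ continuumHull x y, f z ∈ uIcc (f x) (f y)

/-- With `l` and `r` the left and right successors in Urysohn's construction, one of the two is
extremal at every point, so the mean `(l + r) / 2` inherits only half of their error `e`. -/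
theorem half_add_le_max_of_eq_zero_of_eq_one {α : Type*} {S : Set α} {l r : α → ℝ} {e : ℝ}
    (hl : ∀ w, l w ≤ 1) (hr : ∀ w, 0 ≤ r w) (hrS : ∀ w ∈ S, r w = 0) (hlS : ∀ w ∉ S, l w = 1)
    {x y z : α} (hz : x ∈ S → y ∈ S → z ∈ S) (hlz : l z ≤ max (l x) (l y) + e)
    (hrz : r z ≤ max (r x) (r y) + e) :
    (l z + r z) / 2 ≤ max ((l x + r x) / 2) ((l y + r y) / 2) + e / 2 := by
  rw [← sub_le_iff_le_add, le_max_iff] at hlz hrz ⊢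
  have hlz1 := hl z
  by_cases hx : x ∈ S <;> by_cases hy : y ∈ S
  · have hrzS := hrS z (hz hx hy)
    have hrx := hr x
    have hry := hr y
    exact hlz.imp (fun h => by linarith) fun h => by linarith
  · have hly := hlS y hy
    have hrx := hrS x hx
    have hry := hr y
    exact .inr (by rcases hrz with h | h <;> linarith)
  · have hlx := hlS x hx
    have hry := hrS y hy
    have hrx := hr x
    exact .inl (by rcases hrz with h | h <;> linarith)
  · have hlx := hlS x hx
    have hly := hlS y hy
    exact hrz.imp (fun h => by linarith) fun h => by linarith

/-- The pairs of sets fed to Urysohn's construction in order to obtain hull-monotone functions. -/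
abbrev ConnectedPair (C U : Set X) : Prop :=
  IsConnected C ∧ IsConnected Uᶜ

theorem urysohn_lim_le_max_add {x y z : X} (hz : z ∈ continuumHull x y) (n : ℕ)
    (c : Urysohns.CU (ConnectedPair (X := X))) :
    c.lim z ≤ max (c.lim x) (c.lim y) + (1 / 2) ^ n ∧
      1 - c.lim z ≤ max (1 - c.lim x) (1 - c.lim y) + (1 / 2) ^ n := by
  induction n generalizing c with
  | zero =>
    rw [pow_zero]
    exact ⟨(c.lim_le_one z).trans (le_add_of_nonneg_left (le_max_of_le_left (c.lim_nonneg x))),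
      (sub_le_self _ (c.lim_nonneg z)).trans
        (le_add_of_nonneg_left (le_max_of_le_left (sub_nonneg.2 (c.lim_le_one x))))⟩
  | succ n ih =>
    have hmid (w : X) : c.lim w = (c.left.lim w + c.right.lim w) / 2 := by
      rw [c.lim_eq_midpoint, midpoint_eq_smul_add, smul_eq_mul, invOf_eq_inv, inv_mul_eq_div]
    have hmid' (w : X) : 1 - c.lim w = (1 - c.right.lim w + (1 - c.left.lim w)) / 2 := by
      rw [hmid]; ring
    have hright : ∀ w ∈ c.right.C, c.right.lim w = 0 := c.right.lim_of_mem_C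
    have hleft : ∀ w ∉ c.left.U, c.left.lim w = 1 := c.left.lim_of_notMem_U
    have hpow : (1 / 2 : ℝ) ^ (n + 1) = (1 / 2) ^ n / 2 := by rw [pow_succ]; ring
    rw [hmid' x, hmid' y, hmid' z, hmid x, hmid y, hmid z, hpow]
    refine ⟨half_add_le_max_of_eq_zero_of_eq_one (S := c.right.C) c.left.lim_le_one
      c.right.lim_nonneg hright (fun w hw => hleft w fun h => hw (c.left_U_subset_right_C h))
      (fun hx hy => continuumHull_subset c.right.closed_C c.right.P_C_U.1.isPreconnected hx hy hz)
      (ih c.left).1 (ih c.right).1, ?_⟩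
    exact half_add_le_max_of_eq_zero_of_eq_one (S := c.left.Uᶜ) (l := fun w => 1 - c.right.lim w)
      (r := fun w => 1 - c.left.lim w) (fun w => sub_le_self _ (c.right.lim_nonneg w))
      (fun w => sub_nonneg.2 (c.left.lim_le_one w)) (fun w hw => by rw [hleft w hw, sub_self])
      (fun w hw => by
        rw [hright w (c.left_U_subset_right_C (not_notMem.1 hw)), sub_zero])
      (fun hx hy => continuumHull_subset c.left.open_U.isClosed_compl
        c.left.P_C_U.2.isPreconnected hx hy hz)
      (ih c.right).2 (ih c.left).2

theorem hullMonotone_urysohn_lim (c : Urysohns.CU (ConnectedPair (X := X))) :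
    HullMonotone c.lim := by
  intro x y z hz
  have hlim : Tendsto (fun n : ℕ => (1 / 2 : ℝ) ^ n) atTop (𝓝 0) :=
    tendsto_pow_atTop_nhds_zero_of_lt_one one_half_pos.le one_half_lt_one
  have hupper : c.lim z ≤ max (c.lim x) (c.lim y) + 0 :=
    ge_of_tendsto' (hlim.const_add _) fun n => (urysohn_lim_le_max_add hz n c).1
  have hlower : 1 - c.lim z ≤ max (1 - c.lim x) (1 - c.lim y) + 0 :=
    ge_of_tendsto' (hlim.const_add _) fun n => (urysohn_lim_le_max_add hz n c).2
  rw [add_zero] at hupper hlower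
  rw [max_sub_sub_left, sub_le_sub_iff_left] at hlower
  exact ⟨hlower, hupper⟩

theorem exists_hullMonotone_ne [T1Space X] [NormalSpace X] [PreconnectedSpace X]
    [LocallyConnectedSpace X] {x y : X} (hxy : x ≠ y) :
    ∃ f : C(X, ℝ), HullMonotone f ∧ (∀ z, f z ∈ Icc (0 : ℝ) 1) ∧ f x ≠ f y := by
  let c : Urysohns.CU (ConnectedPair (X := X)) :=
    { C := {x}
      U := {y}ᶜ
      P_C_U := ⟨isConnected_singleton, by rw [compl_compl]; exact isConnected_singleton⟩
      closed_C := isClosed_singleton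
      open_U := isOpen_compl_singleton
      subset := singleton_subset_iff.2 hxy
      hP := fun hCc hCU hUo hsub => by
        obtain ⟨W, hWo, hCW, hWU, hWc, hW⟩ :=
          exists_open_between_isConnected hCc hCU.1 hUo hCU.2 hsub
        exact ⟨W, hWo, hCW, hWU, ⟨hCU.1, hWc⟩, hW, hCU.2⟩ }
  refine ⟨⟨c.lim, c.continuous_lim⟩, hullMonotone_urysohn_lim c, c.lim_mem_Icc, ?_⟩
  change c.lim x ≠ c.lim y
  rw [c.lim_of_mem_C x rfl, c.lim_of_notMem_U y (not_not_intro rfl)]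
  exact zero_ne_one

theorem exists_seq_hullMonotone_separating (X : Type*) [TopologicalSpace X]
    [SecondCountableTopology X] [T1Space X] [NormalSpace X] [PreconnectedSpace X]
    [LocallyConnectedSpace X] :
    ∃ φ : ℕ → C(X, ℝ), (∀ n, HullMonotone (φ n)) ∧ (∀ n x, φ n x ∈ Icc (0 : ℝ) 1) ∧
      ∀ x y, x ≠ y → ∃ n, φ n x ≠ φ n y := by
  let I := {f : C(X, ℝ) // HullMonotone f ∧ ∀ x, f x ∈ Icc (0 : ℝ) 1}
  let zero : I := ⟨0, fun _ _ _ _ => left_mem_uIcc, fun _ => ⟨le_rfl, zero_le_one⟩⟩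
  obtain ⟨T, hT, hcov⟩ := TopologicalSpace.isOpen_iUnion_countable
    (fun f : I => {p : X × X | f.1 p.1 ≠ f.1 p.2})
    fun f =>
      isOpen_ne_fun (f.1.continuous.comp continuous_fst) (f.1.continuous.comp continuous_snd)
  obtain ⟨e, he⟩ := (hT.insert zero).exists_eq_range (insert_nonempty _ _)
  refine ⟨fun n => (e n).1, fun n => (e n).2.1, fun n => (e n).2.2, fun x y hxy => ?_⟩
  obtain ⟨f, hf, hf01, hfxy⟩ := exists_hullMonotone_ne hxy
  have hmem : (x, y) ∈ ⋃ f ∈ T, {p : X × X | f.1 p.1 ≠ f.1 p.2} :=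
    hcov ▸ mem_iUnion.2 ⟨⟨f, hf, hf01⟩, hfxy⟩
  obtain ⟨g, hg, hgxy⟩ := mem_iUnion₂.1 hmem
  obtain ⟨n, rfl⟩ : g ∈ range e := he ▸ mem_insert_of_mem _ hg
  exact ⟨n, hgxy⟩

end MonotoneFunctions

section Hyperconvexity

/-- A metric space is hyperconvex (Aronszajn–Panitchpakdi) if every family of closed balls has a
common point as soon as the distance of any two centres is at most the sum of their radii. -/
def Hyperconvex (M : Type*) [PseudoMetricSpace M] : Prop :=
  ∀ B : Set (M × ℝ), (∀ p ∈ B, ∀ q ∈ B, dist p.1 q.1 ≤ p.2 + q.2) → ∃ z, ∀ p ∈ B, dist z p.1 ≤ p.2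

variable {N M : Type*} [PseudoMetricSpace N] [PseudoMetricSpace M]

/-- A binary relation between metric spaces which does not increase distances, such as the graph of
a nonexpansive partial map. -/
def IsNonexpansive (G : Set (N × M)) : Prop :=
  ∀ p ∈ G, ∀ q ∈ G, dist p.2 q.2 ≤ dist p.1 q.1

theorem Hyperconvex.exists_isNonexpansive_insert (hM : Hyperconvex M) {G : Set (N × M)}
    (hG : IsNonexpansive G) (u : N) : ∃ z, IsNonexpansive (insert (u, z) G) := by
  obtain ⟨z, hz⟩ := hM ((fun p : N × M => (p.2, dist u p.1)) '' G) <| by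
    rintro _ ⟨p, hp, rfl⟩ _ ⟨q, hq, rfl⟩
    exact (hG p hp q hq).trans (dist_triangle_left _ _ _)
  refine ⟨z, ?_⟩
  rintro p (rfl | hp) q (rfl | hq)
  · simp only [dist_self, le_refl]
  · exact hz _ (mem_image_of_mem _ hq)
  · rw [dist_comm, dist_comm p.1]
    exact hz _ (mem_image_of_mem _ hp)
  · exact hG p hp q hq

theorem IsNonexpansive.sUnion {C : Set (Set (N × M))} (hC : IsChain (· ⊆ ·) C)
    (h : ∀ G ∈ C, IsNonexpansive G) : IsNonexpansive (⋃₀ C) := by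
  rintro p ⟨G, hG, hp⟩ q ⟨H, hH, hq⟩
  obtain hGH | hHG := hC.total hG hH
  · exact h H hH p (hGH hp) q hq
  · exact h G hG p hp q (hHG hq)

theorem Hyperconvex.exists_lipschitzWith_extension (hM : Hyperconvex M) {f : N → M} {S : Set N}
    (hf : LipschitzOnWith 1 f S) : ∃ g : N → M, LipschitzWith 1 g ∧ EqOn g f S := by
  have hgraph : IsNonexpansive (S.graphOn f) := by
    rintro _ ⟨u, hu, rfl⟩ _ ⟨v, hv, rfl⟩
    simpa only [NNReal.coe_one, one_mul] using hf.dist_le_mul u hu v hv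
  obtain ⟨G, hfG, hG⟩ := zorn_subset_nonempty {G : Set (N × M) | IsNonexpansive G}
    (fun C hC hchain _ => ⟨⋃₀ C, IsNonexpansive.sUnion hchain hC, fun _ => subset_sUnion_of_mem⟩)
    _ hgraph
  have htotal (u : N) : ∃ z, (u, z) ∈ G ∧ (u ∈ S → z = f u) := by
    by_cases hu : u ∈ S
    · exact ⟨f u, hfG (mem_image_of_mem _ hu), fun _ => rfl⟩
    obtain ⟨z, hz⟩ := hM.exists_isNonexpansive_insert hG.prop u
    exact ⟨z, hG.le_of_ge hz (subset_insert _ _) (mem_insert _ _), fun h => absurd h hu⟩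
  choose g hgG hgS using htotal
  exact ⟨g, .mk_one fun u v => hG.prop _ (hgG u) _ (hgG v), hgS⟩

theorem Hyperconvex.exists_lipschitzWith_leftInverse {M : Type*} [MetricSpace M] [Nonempty M]
    (hM : Hyperconvex M) {Φ : M → N} (hΦ : Isometry Φ) :
    ∃ R : N → M, LipschitzWith 1 R ∧ Function.LeftInverse R Φ := by
  have hinv := Function.leftInverse_invFun hΦ.injective
  have hlip : LipschitzOnWith 1 (Function.invFun Φ) (range Φ) := .mk_one <| by
    rintro _ ⟨x, rfl⟩ _ ⟨y, rfl⟩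
    rw [hinv x, hinv y, hΦ.dist_eq]
  obtain ⟨R, hR, hRΦ⟩ := hM.exists_lipschitzWith_extension hlip
  exact ⟨R, hR, fun x => (hRΦ (mem_range_self x)).trans (hinv x)⟩

namespace HereditarilyUnicoherent

variable {X : Type*} [PseudoMetricSpace X] [CompactSpace X]

theorem isPreconnected_closedBall [PreconnectedSpace X] (hX : HereditarilyUnicoherent X)
    (hadd : ∀ x y : X, ∀ z ∈ continuumHull x y, dist x z + dist z y = dist x y) (x : X) (r : ℝ) :
    IsPreconnected (closedBall x r) := by
  refine isPreconnected_of_forall x fun y hy => ⟨continuumHull x y, fun z hz => ?_,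
    left_mem_continuumHull x y, right_mem_continuumHull x y, hX.isPreconnected_continuumHull x y⟩
  rw [mem_closedBall'] at hy ⊢
  linarith [hadd x y z hz, dist_nonneg (x := z) (y := y)]

theorem closedBall_inter_closedBall_nonempty [PreconnectedSpace X]
    (hX : HereditarilyUnicoherent X)
    (hadd : ∀ x y : X, ∀ z ∈ continuumHull x y, dist x z + dist z y = dist x y) {x y : X}
    {r s : ℝ} (hr : 0 ≤ r) (hs : 0 ≤ s) (hxy : dist x y ≤ r + s) :
    (closedBall x r ∩ closedBall y s).Nonempty := by
  obtain hle | hlt := le_or_gt (dist x y) r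
  · exact ⟨y, mem_closedBall'.2 hle, mem_closedBall_self hs⟩
  obtain ⟨z, hz, hxz⟩ := (hX.isPreconnected_continuumHull x y).intermediate_value
    (left_mem_continuumHull x y) (right_mem_continuumHull x y)
    (continuous_const.dist continuous_id).continuousOn
    (show r ∈ Icc (dist x x) (dist x y) from ⟨by rwa [dist_self], hlt.le⟩)
  change dist x z = r at hxz
  refine ⟨z, mem_closedBall'.2 hxz.le, mem_closedBall.2 ?_⟩
  linarith [hadd x y z hz]

theorem hyperconvex [ConnectedSpace X] (hX : HereditarilyUnicoherent X)
    (hadd : ∀ x y : X, ∀ z ∈ continuumHull x y, dist x z + dist z y = dist x y) :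
    Hyperconvex X := by
  intro B hB
  have hnonneg : ∀ p ∈ B, 0 ≤ p.2 := fun p hp => by
    have hpp := hB p hp p hp
    rw [dist_self] at hpp
    linarith
  obtain ⟨z, hz⟩ := hX.iInter_nonempty (F := fun p : B => closedBall p.1.1 p.1.2)
    (fun _ => isClosed_closedBall) (fun _ => hX.isPreconnected_closedBall hadd _ _) fun p q =>
      hX.closedBall_inter_closedBall_nonempty hadd (hnonneg p p.2) (hnonneg q q.2)
        (hB p p.2 q q.2)
  exact ⟨z, fun p hp => mem_iInter.1 hz ⟨p, hp⟩⟩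

end HereditarilyUnicoherent

end Hyperconvexity

section AbsoluteRetracts

theorem HullMonotone.dist_add_dist {X : Type*} [TopologicalSpace X] {f : X → ℝ}
    (hf : HullMonotone f) {x y z : X} (hz : z ∈ continuumHull x y) :
    dist (f x) (f z) + dist (f z) (f y) = dist (f x) (f y) :=
  dist_add_dist_of_mem_segment (segment_eq_uIcc (f x) (f y) ▸ hf x y z hz)

open scoped PiCountable in
theorem exists_isEmbedding_dist_add_dist (X : Type*) [TopologicalSpace X] [CompactSpace X]
    [T2Space X] [SecondCountableTopology X] [PreconnectedSpace X] [LocallyConnectedSpace X] :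
    ∃ Φ : X → ℕ → ℝ, IsEmbedding Φ ∧ ∀ x y, ∀ z ∈ continuumHull x y,
      dist (Φ x) (Φ z) + dist (Φ z) (Φ y) = dist (Φ x) (Φ y) := by
  obtain ⟨φ, hmono, h01, hsep⟩ := exists_seq_hullMonotone_separating X
  -- The weights keep the coordinates below the truncation level of the metric on `ℕ → ℝ`.
  let Φ : X → ℕ → ℝ := fun x n => 2⁻¹ ^ n * φ n x
  have hcont : Continuous Φ := continuous_pi fun n => continuous_const.mul (φ n).continuous
  have hinj : Function.Injective Φ := fun x y hxy => by
    by_contra hne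
    obtain ⟨n, hn⟩ := hsep x y hne
    exact hn (mul_left_cancel₀ (by positivity) (congrFun hxy n))
  have hdist (x y : X) (n : ℕ) :
      min (2⁻¹ ^ Encodable.encode n) (dist (Φ x n) (Φ y n)) = 2⁻¹ ^ n * dist (φ n x) (φ n y) := by
    have hle : dist (φ n x) (φ n y) ≤ 1 := by
      simpa only [sub_zero] using Real.dist_le_of_mem_Icc (h01 n x) (h01 n y)
    rw [Encodable.encode_nat, Real.dist_eq, ← mul_sub, abs_mul, abs_of_pos (by positivity),
      ← Real.dist_eq]
    exact min_eq_right (mul_le_of_le_one_right (by positivity) hle)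
  refine ⟨Φ, (hcont.isClosedEmbedding hinj).isEmbedding, fun x y z hz => ?_⟩
  simp only [PiCountable.dist_eq_tsum]
  rw [← (PiCountable.dist_summable _ _).tsum_add (PiCountable.dist_summable _ _)]
  refine tsum_congr fun n => ?_
  rw [hdist, hdist, hdist, ← mul_add, (hmono n).dist_add_dist hz]

open scoped PiCountable in
theorem HereditarilyUnicoherent.exists_retract_pi {X : Type*} [TopologicalSpace X]
    [CompactSpace X] [T2Space X] [SecondCountableTopology X] [ConnectedSpace X]
    [LocallyConnectedSpace X] (hX : HereditarilyUnicoherent X) :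
    ∃ (Φ : C(X, ℕ → ℝ)) (R : C(ℕ → ℝ, X)), Function.LeftInverse R Φ := by
  obtain ⟨Φ, hΦ, hadd⟩ := exists_isEmbedding_dist_add_dist X
  let _ : MetricSpace (ℕ → ℝ) := PiCountable.metricSpace
  let _ : MetricSpace X := hΦ.comapMetricSpace
  obtain ⟨R, hR, hRΦ⟩ := (hX.hyperconvex hadd).exists_lipschitzWith_leftInverse
    (Isometry.of_dist_eq (f := Φ) fun _ _ => rfl)
  exact ⟨⟨Φ, hΦ.continuous⟩, ⟨R, hR.continuous⟩, hRΦ⟩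

theorem isAR_of_leftInverse {X : Type*} [MetricSpace X] {E : Type*} [TopologicalSpace E]
    [TietzeExtension.{0} E] {Φ : C(X, E)} {R : C(E, X)} (h : Function.LeftInverse R Φ) :
    IsAR X := by
  intro Y _ Z hZ f
  obtain ⟨g, hg⟩ := ContinuousMap.exists_restrict_eq hZ (Φ.comp f)
  refine ⟨R.comp g, fun z => ?_⟩
  have hgz : g z = Φ (f z) := DFunLike.congr_fun hg z
  rw [ContinuousMap.comp_apply, hgz, h]

theorem IsAR.contractibleSpace {X : Type} [MetricSpace X] [Nonempty X] (hX : IsAR X) :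
    ContractibleSpace X := by
  obtain ⟨x₀⟩ := ‹Nonempty X›
  let Z : Set (unitInterval × X) := {p | p.1 = 0 ∨ p.1 = 1}
  have hZ : IsClosed Z := (isClosed_eq continuous_fst continuous_const).union
    (isClosed_eq continuous_fst continuous_const)
  have hf : Continuous fun p : Z => if (p.1.1 : ℝ) ≤ 1 / 2 then p.1.2 else x₀ := by
    refine Continuous.if_le (by fun_prop) (by fun_prop) (by fun_prop) (by fun_prop) ?_
    rintro ⟨⟨t, x⟩, ht₀ | ht₁⟩ (ht : (t : ℝ) = 1 / 2)
    · norm_num [show t = 0 from ht₀] at ht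
    · norm_num [show t = 1 from ht₁] at ht
  obtain ⟨g, hg⟩ := hX (unitInterval × X) Z hZ ⟨_, hf⟩
  refine (contractible_iff_id_nullhomotopic X).2 ⟨x₀, ⟨⟨g, fun x => ?_, fun x => ?_⟩⟩⟩
  · refine (hg ⟨(0, x), .inl rfl⟩).trans (if_pos ?_)
    norm_num
  · refine (hg ⟨(1, x), .inr rfl⟩).trans (if_neg ?_)
    norm_num

end AbsoluteRetracts

/-- A one-dimensional Peano continuum is an AR iff it is simply connected. -/
theorem stmt_13 {X : Type} [MetricSpace X] [CompactSpace X] [ConnectedSpace X]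
    [LocallyConnectedSpace X] (hdim : CovDimLE X 1) :
    IsAR X ↔ SimplyConnectedSpace X := by
  constructor
  · intro hX
    have := hX.contractibleSpace
    infer_instance
  · intro _
    have := (uniformlyLocallyConnected_of_compactSpace X).locallyPathConnectedSpace
    have hX := hereditarilyUnicoherent_of_simplyConnectedSpace hdim
    obtain ⟨Φ, R, hR⟩ := hX.exists_retract_pi
    exact isAR_of_leftInverse hR
end

section
/- Let X be a one-dimensional Peano continuum and ε > 0. Then there exists a finite subgraph Y ⊆ X and a surjective continuous map f : X → Y such that d(x, f(x)) < ε for all x ∈ X. -/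
open Set

/-- A subset is a finite (topological) graph: finitely many vertices and finitely
many edges, each edge an arc with endpoints among the vertices, interiors of edges
pairwise disjoint and disjoint from the vertex set. -/
def IsFiniteTopGraph {X : Type*} [TopologicalSpace X] (Y : Set X) : Prop :=
  ∃ (V : Finset X) (n : ℕ) (e : Fin n → C(unitInterval, X)),
    (∀ i, Function.Injective (e i)) ∧
    (∀ i, e i 0 ∈ V ∧ e i 1 ∈ V) ∧
    (∀ i, ∀ t : unitInterval, e i t ∈ V → t = 0 ∨ t = 1) ∧
    (∀ i j, i ≠ j → ∀ x, x ∈ Set.range (e i) → x ∈ Set.range (e j) → x ∈ V) ∧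
    Y = ↑V ∪ ⋃ i, Set.range (e i)

/-!
Cover `X` by finitely many small connected open sets `U i` such that no point lies in three of them
and each has a private point `p i`. The nerve of the cover is then a graph. Join `p i` to `p j` by a
path inside `U i ∪ U j` whenever `U i` meets `U j`, adding these paths one at a time. To keep the
union a finite graph, cut the graph already built into small pieces, make the new path an arc, and
replace its part between the first and the last visit to each piece by a path in that piece. Sending
`X` to the nerve along the distances to the complements of the `U i`, and the nerve to `X` along the
paths, moves points little; an edge lies in the image because `U i ∪ U j` is connected.

A connected, locally connected, complete space is path-connected: start from a function on `[0, 1]`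
whose jumps stay in small connected sets, and refine it. A path contains an arc with the same
ends: take a minimal closed set of times `K` such that the path takes equal values at the ends of
each gap of `K`. Frozen on the gaps, the path has intervals as fibres, and collapsing these gives
the arc.
-/

open Filter Topology unitInterval

section RoughlyContinuous

variable {X α : Type*} [MetricSpace X] [TopologicalSpace α]

/-- Continuity at `t` up to an error `r`: near `t` the map takes its values in a preconnected subset
of the `r`-ball around its value. Connectedness of that subset is what allows the error to be
decreased by changing the map only locally. -/
def RoughlyContinuousAt (r : ℝ) (g : α → X) (t : α) : Prop :=
  ∃ C, IsPreconnected C ∧ C ⊆ Metric.ball (g t) r ∧ ∀ᶠ s in 𝓝 t, g s ∈ C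

theorem RoughlyContinuousAt.congr {r : ℝ} {g g' : α → X} {t : α} (h : RoughlyContinuousAt r g t)
    (hgg' : g =ᶠ[𝓝 t] g') : RoughlyContinuousAt r g' t := by
  obtain ⟨C, hC, hCr, hgC⟩ := h
  refine ⟨C, hC, hgg'.eq_of_nhds ▸ hCr, ?_⟩
  filter_upwards [hgC, hgg'] with s hs hss'
  rwa [← hss']

theorem roughlyContinuousAt_const {r : ℝ} (hr : 0 < r) (x : X) (t : α) :
    RoughlyContinuousAt r (fun _ => x) t :=
  ⟨{x}, isPreconnected_singleton, singleton_subset_iff.2 (Metric.mem_ball_self hr),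
    Eventually.of_forall fun _ => rfl⟩

variable [LinearOrder α] [OrderTopology α]

theorem RoughlyContinuousAt.ite_of_ne {r : ℝ} {g₁ g₂ : α → X} {m t : α} (htm : t ≠ m)
    (h₁ : RoughlyContinuousAt r g₁ t) (h₂ : RoughlyContinuousAt r g₂ t) :
    RoughlyContinuousAt r (fun u => if u ≤ m then g₁ u else g₂ u) t := by
  rcases htm.lt_or_gt with htm | hmt
  · refine h₁.congr ?_
    filter_upwards [Iio_mem_nhds htm] with u hu
    exact (if_pos (le_of_lt hu)).symm
  · refine h₂.congr ?_
    filter_upwards [Ioi_mem_nhds hmt] with u hu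
    exact (if_neg (not_le_of_gt hu)).symm

theorem RoughlyContinuousAt.ite {r : ℝ} {g₁ g₂ : α → X} {m : α} (hm : g₁ m = g₂ m)
    (h₁ : ∀ t, RoughlyContinuousAt r g₁ t) (h₂ : ∀ t, RoughlyContinuousAt r g₂ t) (t : α) :
    RoughlyContinuousAt r (fun u => if u ≤ m then g₁ u else g₂ u) t := by
  rcases eq_or_ne t m with rfl | htm
  · obtain ⟨C₁, hC₁, hCr₁, hgC₁⟩ := h₁ t
    obtain ⟨C₂, hC₂, hCr₂, hgC₂⟩ := h₂ t
    refine ⟨C₁ ∪ C₂, hC₁.union (g₁ t) hgC₁.self_of_nhds (hm ▸ hgC₂.self_of_nhds) hC₂, ?_, ?_⟩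
    · simpa only [le_refl, if_true] using union_subset hCr₁ (hm ▸ hCr₂)
    · filter_upwards [hgC₁, hgC₂] with u hu₁ hu₂
      split_ifs
      exacts [Or.inl hu₁, Or.inr hu₂]
  · exact (h₁ t).ite_of_ne htm (h₂ t)

theorem roughlyContinuousAt_step {r : ℝ} (hr : 0 < r) {x y : X} {C : Set X} (hC : IsPreconnected C)
    (hCr : C ⊆ Metric.ball x r) (hx : x ∈ C) (hy : y ∈ C) (m t : α) :
    RoughlyContinuousAt r (fun u => if u ≤ m then x else y) t := by
  rcases eq_or_ne t m with rfl | htm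
  · refine ⟨C, hC, by simpa only [le_refl, if_true], Eventually.of_forall fun u => ?_⟩
    dsimp only
    split_ifs
    exacts [hx, hy]
  · exact (roughlyContinuousAt_const hr x t).ite_of_ne htm (roughlyContinuousAt_const hr y t)

variable [LocallyConnectedSpace X]

theorem exists_roughlyContinuousAt_of_isPreconnected [DenselyOrdered α] {C : Set X}
    (hC : IsPreconnected C) {r : ℝ} (hr : 0 < r) {x y : X} (hx : x ∈ C) (hy : y ∈ C) {s t : α}
    (hst : s < t) :
    ∃ g : α → X, (∀ u, RoughlyContinuousAt r g u) ∧ g s = x ∧ g t = y ∧ ∀ u, g u ∈ C := by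
  refine hC.induction₂' (fun x y => ∀ s t : α, s < t →
    ∃ g : α → X, (∀ u, RoughlyContinuousAt r g u) ∧ g s = x ∧ g t = y ∧ ∀ u, g u ∈ C)
    (fun x hx => ?_) (fun x y z _ _ _ hxy hyz s t hst => ?_) hx hy s t hst
  · have step {a b : X} {V : Set X} (hV : IsPreconnected V) (hVx : V ⊆ Metric.ball x (r / 2))
        (ha : a ∈ V) (hb : b ∈ V) (haC : a ∈ C) (hbC : b ∈ C) (s t : α) (hst : s < t) :
        ∃ g : α → X, (∀ u, RoughlyContinuousAt r g u) ∧ g s = a ∧ g t = b ∧ ∀ u, g u ∈ C := by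
      have hVa : V ⊆ Metric.ball a r := fun z hz => by
        have hzx : dist z x < r / 2 := hVx hz
        have hax : dist a x < r / 2 := hVx ha
        exact Metric.mem_ball.2 (by linarith [dist_triangle_right z a x])
      refine ⟨_, roughlyContinuousAt_step hr hV hVa ha hb s, if_pos le_rfl,
        if_neg hst.not_ge, fun u => ?_⟩
      split_ifs <;> assumption
    obtain ⟨V, hVx, hV, hVr⟩ := locallyConnectedSpace_iff_connected_subsets.1 ‹_› x _
      (Metric.ball_mem_nhds x (half_pos hr))
    filter_upwards [self_mem_nhdsWithin, mem_nhdsWithin_of_mem_nhds hVx] with y hyC hyV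
    exact ⟨step hV hVr (mem_of_mem_nhds hVx) hyV hx hyC,
      step hV hVr hyV (mem_of_mem_nhds hVx) hyC hx⟩
  · obtain ⟨m, hsm, hmt⟩ := exists_between hst
    obtain ⟨g₁, hg₁, hs₁, hm₁, hC₁⟩ := hxy s m hsm
    obtain ⟨g₂, hg₂, hm₂, ht₂, hC₂⟩ := hyz m t hmt
    refine ⟨_, RoughlyContinuousAt.ite (hm₁.trans hm₂.symm) hg₁ hg₂, by rwa [if_pos hsm.le],
      by rwa [if_neg hmt.not_ge], fun u => ?_⟩
    split_ifs
    exacts [hC₁ u, hC₂ u]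

theorem RoughlyContinuousAt.exists_refinement {r r' : ℝ} (hr' : 0 < r') {g : I → X}
    (hg : ∀ t, RoughlyContinuousAt r g t) :
    ∃ g' : I → X, (∀ t, RoughlyContinuousAt r' g' t) ∧ g' 0 = g 0 ∧ g' 1 = g 1 ∧
      ∀ u, dist (g u) (g' u) < 2 * r := by
  choose C hC hCr hgC using hg
  obtain ⟨t, ht0, htmono, ⟨n, htn⟩, hcover⟩ := exists_monotone_Icc_subset_open_cover_unitInterval
    (c := fun i => interior {s | g s ∈ C i}) (fun _ => isOpen_interior)
    fun i _ => mem_iUnion.2 ⟨i, mem_interior_iff_mem_nhds.2 (hgC i)⟩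
  have refine_prefix (k : ℕ) : ∃ g' : I → X, (∀ u, RoughlyContinuousAt r' g' u) ∧ g' 0 = g 0 ∧
      g' (t k) = g (t k) ∧ ∀ u ≤ t k, dist (g u) (g' u) < 2 * r := by
    induction k with
    | zero =>
      refine ⟨_, roughlyContinuousAt_const hr' (g 0), rfl, by rw [ht0], fun u hu => ?_⟩
      have hr : 0 < r := Metric.pos_of_mem_ball (hCr 0 (hgC 0).self_of_nhds)
      rw [show u = 0 from le_antisymm (ht0 ▸ hu) unitInterval.nonneg', dist_self]
      positivity
    | succ k ih =>
      obtain ⟨g₁, hg₁, h0, hk, hclose⟩ := ih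
      rcases (htmono k.le_succ).eq_or_lt with heq | hlt
      · exact ⟨g₁, hg₁, h0, heq ▸ hk, heq ▸ hclose⟩
      obtain ⟨i, hi⟩ := hcover k
      have hgi : ∀ u ∈ Icc (t k) (t (k + 1)), g u ∈ C i := fun u hu =>
        interior_subset (s := {s | g s ∈ C i}) (hi hu)
      obtain ⟨g₂, hg₂, hs, ht, hC₂⟩ := exists_roughlyContinuousAt_of_isPreconnected (hC i) hr'
        (hgi _ (left_mem_Icc.2 hlt.le)) (hgi _ (right_mem_Icc.2 hlt.le)) hlt
      refine ⟨_, RoughlyContinuousAt.ite (hk.trans hs.symm) hg₁ hg₂,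
        by rwa [if_pos unitInterval.nonneg'], by rwa [if_neg hlt.not_ge], fun u hu => ?_⟩
      split_ifs with huk
      · exact hclose u huk
      · have hu₁ := hCr i (hgi u ⟨le_of_not_ge huk, hu⟩)
        have hu₂ := hCr i (hC₂ u)
        linarith [dist_triangle_right (g u) (g₂ u) (g i), Metric.mem_ball.1 hu₁,
          Metric.mem_ball.1 hu₂]
  obtain ⟨g', hg', h0, h1, hclose⟩ := refine_prefix n
  rw [htn n le_rfl] at h1 hclose
  exact ⟨g', hg', h0, h1, fun u => hclose u unitInterval.le_one'⟩

theorem RoughlyContinuousAt.exists_seq_refinement {r : ℕ → ℝ} (hr : ∀ n, 0 < r n) {g : I → X}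
    (hg : ∀ t, RoughlyContinuousAt (r 0) g t) :
    ∃ G : ℕ → I → X, G 0 = g ∧ (∀ n t, RoughlyContinuousAt (r n) (G n) t) ∧
      ∀ n, G (n + 1) 0 = G n 0 ∧ G (n + 1) 1 = G n 1 ∧
        ∀ t, dist (G n t) (G (n + 1) t) < 2 * r n := by
  choose refinement hrefinement using fun n
      (g : {g : I → X // ∀ t, RoughlyContinuousAt (r n) g t}) => exists_refinement (hr (n + 1)) g.2
  let G (n : ℕ) : {g : I → X // ∀ t, RoughlyContinuousAt (r n) g t} :=
    n.rec ⟨g, hg⟩ fun n g => ⟨refinement n g, (hrefinement n g).1⟩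
  exact ⟨fun n => (G n).1, rfl, fun n => (G n).2, fun n => (hrefinement n (G n)).2⟩

/-- Successive refinements with errors `r / 4, r / 8, …` converge uniformly to a path. -/
theorem RoughlyContinuousAt.exists_path [CompleteSpace X] {r : ℝ} (hr : 0 < r) {g : I → X}
    (hg : ∀ t, RoughlyContinuousAt (r / 4) g t) :
    ∃ γ : Path (g 0) (g 1), ∀ t, dist (g t) (γ t) ≤ r := by
  obtain ⟨G, rfl, hG, hGsucc⟩ := exists_seq_refinement (r := fun n => r / 4 / 2 ^ n)
    (fun n => by positivity) (by simpa using hg)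
  have hGendpoints (n : ℕ) : G n 0 = G 0 0 ∧ G n 1 = G 0 1 := by
    induction n with
    | zero => exact ⟨rfl, rfl⟩
    | succ n ih => exact ⟨(hGsucc n).1.trans ih.1, (hGsucc n).2.1.trans ih.2⟩
  have hGdist (t : I) (n : ℕ) : dist (G n t) (G (n + 1) t) ≤ r / 2 / 2 ^ n :=
    ((hGsucc n).2.2 t).le.trans_eq (by ring)
  choose f hf using fun t =>
    cauchySeq_tendsto_of_complete (cauchySeq_of_le_geometric_two (hGdist t))
  have hfdist (t : I) (n : ℕ) : dist (G n t) (f t) ≤ r / 2 ^ n :=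
    dist_le_of_le_geometric_two_of_tendsto (hGdist t) (hf t) n
  have hfcont : Continuous f := by
    refine Metric.continuous_iff'.2 fun t ε hε => ?_
    obtain ⟨n, hn⟩ := exists_pow_lt_of_lt_one (show 0 < ε / (3 * r) by positivity) one_half_lt_one
    have hn' : 3 * (r / 2 ^ n) < ε := by
      rw [lt_div_iff₀ (by positivity)] at hn
      calc 3 * (r / 2 ^ n) = (1 / 2) ^ n * (3 * r) := by rw [one_div, inv_pow]; ring
        _ < ε := hn
    obtain ⟨C, -, hC, hGC⟩ := hG n t
    filter_upwards [hGC] with s hs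
    have hst : dist (G n s) (G n t) < r / 4 / 2 ^ n := hC hs
    have : dist (f s) (f t) ≤ dist (f s) (G n s) + dist (G n s) (G n t) + dist (G n t) (f t) :=
      dist_triangle4 _ _ _ _
    have : r / 4 / 2 ^ n ≤ r / 2 ^ n := by gcongr; linarith
    linarith [hfdist s n, hfdist t n, dist_comm (f s) (G n s)]
  refine ⟨⟨⟨f, hfcont⟩, ?_, ?_⟩, fun t => (hfdist t 0).trans_eq (by simp)⟩
  · exact tendsto_nhds_unique (hf 0) (by simpa only [hGendpoints] using tendsto_const_nhds)
  · exact tendsto_nhds_unique (hf 1) (by simpa only [hGendpoints] using tendsto_const_nhds)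

theorem locallyPathConnectedSpace_of_locallyConnectedSpace [CompleteSpace X] :
    LocallyPathConnectedSpace X := by
  refine locallyPathConnectedSpace_iff_isOpen_pathComponentIn.2 fun x U hU =>
    isOpen_iff_mem_nhds.2 fun y hy => ?_
  obtain ⟨r, hr, hrU⟩ := Metric.isOpen_iff.1 hU y hy.target_mem
  obtain ⟨C, hCy, hC, hCr⟩ := locallyConnectedSpace_iff_connected_subsets.1 ‹_› y _
      (Metric.ball_mem_nhds y (half_pos hr))
  filter_upwards [hCy] with z hz
  obtain ⟨g, hg, rfl, rfl, hgC⟩ := exists_roughlyContinuousAt_of_isPreconnected hC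
    (show 0 < r / 3 / 4 by positivity) (mem_of_mem_nhds hCy) hz (zero_lt_one (α := I))
  obtain ⟨γ, hγ⟩ := RoughlyContinuousAt.exists_path (by positivity) hg
  refine hy.trans ⟨γ, fun t => hrU ?_⟩
  have hgt : dist (g t) (g 0) < r / 2 := hCr (hgC t)
  rw [Metric.mem_ball]
  linarith [hγ t, dist_triangle_left (γ t) (g 0) (g t)]

end RoughlyContinuous

section Shortcut

variable {α X : Type*} [CompleteLinearOrder α]

/-- The curve `γ`, frozen on the gaps of `K`, on each at its value at the left end. -/
def freeze (γ : α → X) (K : Set α) (x : α) : X :=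
  γ (sSup (K ∩ Iic x))

theorem freeze_of_mem (γ : α → X) {K : Set α} {x : α} (hx : x ∈ K) : freeze γ K x = γ x := by
  have : IsGreatest (K ∩ Iic x) x := ⟨⟨hx, self_mem_Iic⟩, fun _ hy => hy.2⟩
  rw [freeze, this.csSup_eq]

variable [TopologicalSpace α]

/-- A closed set of parameters containing both ends, such that `γ` takes the same value at the two
ends of every gap. Freezing `γ` on the gaps thus gives a curve with the same ends as `γ`. -/
structure IsShortcut (γ : α → X) (K : Set α) : Prop where
  isClosed : IsClosed K
  bot_mem : ⊥ ∈ K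
  top_mem : ⊤ ∈ K
  eq_of_gap : ∀ ⦃s⦄, s ∈ K → ∀ ⦃t⦄, t ∈ K → s < t → Disjoint K (Ioo s t) → γ s = γ t

theorem isShortcut_univ [DenselyOrdered α] (γ : α → X) : IsShortcut γ univ where
  isClosed := isClosed_univ
  bot_mem := mem_univ _
  top_mem := mem_univ _
  eq_of_gap _ _ _ _ hst hgap := absurd (univ_disjoint.1 hgap) (nonempty_Ioo.2 hst).ne_empty

variable [OrderTopology α]

theorem IsShortcut.diff_Ioo {γ : α → X} {K : Set α} (hK : IsShortcut γ K) {s t : α} (hs : s ∈ K)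
    (ht : t ∈ K) (hst : γ s = γ t) : IsShortcut γ (K \ Ioo s t) where
  isClosed := hK.isClosed.sdiff isOpen_Ioo
  bot_mem := ⟨hK.bot_mem, fun h => not_lt_bot h.1⟩
  top_mem := ⟨hK.top_mem, fun h => not_top_lt h.2⟩
  eq_of_gap a ha b hb hab hgap := by
    by_cases hKab : Disjoint K (Ioo a b)
    · exact hK.eq_of_gap ha.1 hb.1 hab hKab
    obtain ⟨c, hcK, hac, hcb⟩ := not_disjoint_iff.1 hKab
    have hc : c ∈ Ioo s t := by_contra fun h => hgap.notMem_of_mem_left ⟨hcK, h⟩ ⟨hac, hcb⟩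
    have hmem {x : α} (hx : x ∈ K) (hxst : x ∉ Ioo s t) : x ∉ Ioo a b :=
      hgap.notMem_of_mem_left ⟨hx, hxst⟩
    have has : a = s := le_antisymm (not_lt.1 fun h => ha.2 ⟨h, hac.trans hc.2⟩)
      (not_lt.1 fun h => hmem hs (fun h => h.1.false) ⟨h, hc.1.trans hcb⟩)
    have hbt : b = t := le_antisymm (not_lt.1 fun h => hmem ht (fun h => h.2.false)
      ⟨hac.trans hc.2, h⟩) (not_lt.1 fun h => hb.2 ⟨hc.1.trans hcb, h⟩)
    rw [has, hbt, hst]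

/-- The values of `γ` on a shortcut are as connected as those of `γ` itself. -/
theorem IsShortcut.exists_mem_Ioo [TopologicalSpace X] {γ : α → X} (hγ : Continuous γ) {K : Set α}
    (hK : IsShortcut γ K) {U V : Set X} (hU : IsOpen U) (hV : IsOpen V) (hUV : Disjoint U V)
    {s t : α} (hs : s ∈ K) (ht : t ∈ K) (hst : s ≤ t) (hsU : γ s ∈ U) (htV : γ t ∈ V) :
    ∃ c ∈ K ∩ Ioo s t, γ c ∉ U ∪ V := by
  by_contra! hcover
  have hUV' {c : α} (hcK : c ∈ K) (hc : c ∈ Icc s t) : γ c ∈ U ∪ V := by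
    rcases eq_endpoints_or_mem_Ioo_of_mem_Icc hc with rfl | rfl | hc
    exacts [Or.inl hsU, Or.inr htV, hcover c ⟨hcK, hc⟩]
  obtain ⟨a, ⟨⟨haK, ha⟩, haV⟩, ha_max⟩ :=
    ((hK.isClosed.inter isClosed_Icc).inter (hV.preimage hγ).isClosed_compl).isCompact
      |>.exists_isGreatest ⟨s, ⟨hs, left_mem_Icc.2 hst⟩, hUV.notMem_of_mem_left hsU⟩
  obtain ⟨b, ⟨⟨hbK, hb⟩, hbU⟩, hb_min⟩ :=
    ((hK.isClosed.inter isClosed_Icc).inter (hU.preimage hγ).isClosed_compl).isCompact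
      |>.exists_isLeast ⟨t, ⟨ht, right_mem_Icc.2 ha.2⟩, hUV.notMem_of_mem_right htV⟩
  have haU : γ a ∈ U := (hUV' haK ha).resolve_right haV
  have hbV : γ b ∈ V := (hUV' hbK ⟨ha.1.trans hb.1, hb.2⟩).resolve_left hbU
  have hab : a < b := hb.1.lt_of_ne fun h => hbU (h ▸ haU)
  have hgap : Disjoint K (Ioo a b) := disjoint_left.2 fun c hcK hc => by
    have hcst : c ∈ Icc s t := ⟨ha.1.trans hc.1.le, hc.2.le.trans hb.2⟩
    rcases hUV' hcK hcst with hcU | hcV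
    · exact hc.1.not_ge (ha_max ⟨⟨hcK, hcst⟩, hUV.notMem_of_mem_left hcU⟩)
    · exact hc.2.not_ge (hb_min ⟨⟨hcK, hc.1.le, hcst.2⟩, hUV.notMem_of_mem_right hcV⟩)
  exact hUV.notMem_of_mem_left haU (hK.eq_of_gap haK hbK hab hgap ▸ hbV)

theorem IsShortcut.sInter [TopologicalSpace X] [T2Space X] {γ : α → X} (hγ : Continuous γ)
    {S : Set (Set α)} (hne : S.Nonempty) (hchain : IsChain (· ⊆ ·) S)
    (hS : ∀ K ∈ S, IsShortcut γ K) : IsShortcut γ (⋂₀ S) where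
  isClosed := isClosed_sInter fun K hK => (hS K hK).isClosed
  bot_mem K hK := (hS K hK).bot_mem
  top_mem K hK := (hS K hK).top_mem
  eq_of_gap s hs t ht hst hgap := by
    by_contra hne'
    obtain ⟨U, V, hU, hV, hsU, htV, hUV⟩ := t2_separation hne'
    have hW : IsOpen (Iio s ∪ Ioi t ∪ (γ ⁻¹' U ∪ γ ⁻¹' V)) :=
      (isOpen_Iio.union isOpen_Ioi).union ((hU.preimage hγ).union (hV.preimage hγ))
    have hSW : ⋂₀ S ⊆ Iio s ∪ Ioi t ∪ (γ ⁻¹' U ∪ γ ⁻¹' V) := fun x hx => by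
      by_contra hxW
      simp only [mem_union, mem_Iio, mem_Ioi, mem_preimage, not_or, not_lt] at hxW
      exact hgap.notMem_of_mem_left hx ⟨hxW.1.1.lt_of_ne fun h => hxW.2.1 (h ▸ hsU),
        hxW.1.2.lt_of_ne fun h => hxW.2.2 (h ▸ htV)⟩
    have : Nonempty S := hne.to_subtype
    obtain ⟨⟨K, hKS⟩, hKW⟩ := exists_subset_nhds_of_compactSpace
      (directedOn_iff_directed.1 (IsChain.directedOn (r := fun A B : Set α => A ⊇ B) hchain.symm))
      (fun K : S => (hS K K.2).isClosed)
      fun x hx => hW.mem_nhds (hSW (sInter_eq_iInter ▸ hx))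
    obtain ⟨c, ⟨hcK, hc⟩, hcUV⟩ :=
      (hS K hKS).exists_mem_Ioo hγ hU hV hUV (hs K hKS) (ht K hKS) hst.le hsU htV
    rcases hKW hcK with h | h
    exacts [h.elim hc.1.not_gt hc.2.not_gt, hcUV h]

theorem exists_minimal_isShortcut [DenselyOrdered α] [TopologicalSpace X] [T2Space X] {γ : α → X}
    (hγ : Continuous γ) : ∃ K, Minimal (IsShortcut γ) K := by
  obtain ⟨K, -, hK⟩ := zorn_superset_nonempty {K | IsShortcut γ K}
    (fun S hS hchain hne => ⟨⋂₀ S, .sInter hγ hne hchain hS, fun K hK => sInter_subset_of_mem hK⟩)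
    univ (isShortcut_univ γ)
  exact ⟨K, hK⟩

theorem IsShortcut.disjoint_Ioo_of_minimal {γ : α → X} {K : Set α} (hK : Minimal (IsShortcut γ) K)
    {s t : α} (hs : s ∈ K) (ht : t ∈ K) (hst : γ s = γ t) : Disjoint K (Ioo s t) :=
  disjoint_left.2 fun _ hcK => (hK.2 (hK.1.diff_Ioo hs ht hst) sdiff_subset hcK).2

theorem IsShortcut.sSup_mem {γ : α → X} {K : Set α} (hK : IsShortcut γ K) (x : α) :
    sSup (K ∩ Iic x) ∈ K ∩ Iic x :=
  (hK.isClosed.inter isClosed_Iic).isCompact.sSup_mem ⟨⊥, hK.bot_mem, bot_le⟩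

theorem IsShortcut.sInf_mem {γ : α → X} {K : Set α} (hK : IsShortcut γ K) (x : α) :
    sInf (K ∩ Ici x) ∈ K ∩ Ici x :=
  (hK.isClosed.inter isClosed_Ici).isCompact.sInf_mem ⟨⊤, hK.top_mem, le_top⟩

theorem IsShortcut.freeze_eq_apply_sInf {γ : α → X} {K : Set α} (hK : IsShortcut γ K) (x : α) :
    freeze γ K x = γ (sInf (K ∩ Ici x)) := by
  by_cases hx : x ∈ K
  · have : IsLeast (K ∩ Ici x) x := ⟨⟨hx, self_mem_Ici⟩, fun _ hy => hy.2⟩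
    rw [freeze_of_mem γ hx, this.csInf_eq]
  have hlt {y : α} (hy : y ∈ K) (hyx : y ≤ x) : y < x := hyx.lt_of_ne fun h => hx (h ▸ hy)
  refine hK.eq_of_gap (hK.sSup_mem x).1 (hK.sInf_mem x).1
    ((hlt (hK.sSup_mem x).1 (hK.sSup_mem x).2).trans_le (hK.sInf_mem x).2)
    (disjoint_left.2 fun c hcK hc => ?_)
  rcases le_total c x with hcx | hxc
  · exact hc.1.not_ge (le_sSup ⟨hcK, hcx⟩)
  · exact hc.2.not_ge (sInf_le ⟨hcK, hxc⟩)

theorem IsShortcut.continuous_freeze [TopologicalSpace X] {γ : α → X} (hγ : Continuous γ)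
    {K : Set α} (hK : IsShortcut γ K) : Continuous (freeze γ K) := by
  refine continuous_iff_continuousAt.2 fun x => ?_
  by_cases hx : x ∈ K
  · refine fun U hU => mem_map.2 ?_
    rw [freeze_of_mem γ hx] at hU
    obtain ⟨b, c, hxbc, hbc, hbcU⟩ := exists_Icc_mem_subset_of_mem_nhds (hγ.continuousAt hU)
    filter_upwards [hbc] with y hy
    rcases le_total x y with hxy | hyx
    · have : x ≤ sSup (K ∩ Iic y) := le_sSup ⟨hx, hxy⟩
      exact hbcU ⟨hxbc.1.trans this, (hK.sSup_mem y).2.trans hy.2⟩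
    · have : sInf (K ∩ Ici y) ≤ x := sInf_le ⟨hx, hyx⟩
      rw [mem_preimage, hK.freeze_eq_apply_sInf]
      exact hbcU ⟨hy.1.trans (hK.sInf_mem y).2, this.trans hxbc.2⟩
  · have hgap : Ioo (sSup (K ∩ Iic x)) (sInf (K ∩ Ici x)) ∈ 𝓝 x := Ioo_mem_nhds
      ((hK.sSup_mem x).2.lt_of_ne fun h => hx (h ▸ (hK.sSup_mem x).1))
      ((hK.sInf_mem x).2.lt_of_ne fun h => hx (h ▸ (hK.sInf_mem x).1))
    refine continuousAt_const.congr (f := fun _ => freeze γ K x) ?_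
    filter_upwards [hgap] with y hy
    rw [freeze, freeze, show K ∩ Iic x = K ∩ Iic y from Set.ext fun c => ?_]
    refine and_congr_right fun hcK => ⟨fun hcx => ?_, fun hcy => not_lt.1 fun hxc => ?_⟩
    · exact (le_sSup (show c ∈ K ∩ Iic x from ⟨hcK, hcx⟩)).trans hy.1.le
    · exact hy.2.not_ge ((sInf_le (show c ∈ K ∩ Ici x from ⟨hcK, hxc.le⟩)).trans hcy)

theorem IsShortcut.ordConnected_preimage_freeze {γ : α → X} {K : Set α}
    (hK : Minimal (IsShortcut γ) K) (x : X) : OrdConnected (freeze γ K ⁻¹' {x}) := by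
  refine ordConnected_iff.2 fun a ha b hb _ c hc => ?_
  have hmono : Monotone fun y => sSup (K ∩ Iic y) := fun y z hyz =>
    sSup_le_sSup (inter_subset_inter_right K (Iic_subset_Iic.2 hyz))
  have hgap := disjoint_Ioo_of_minimal hK (hK.1.sSup_mem a).1 (hK.1.sSup_mem b).1 (ha.trans hb.symm)
  rcases eq_endpoints_or_mem_Ioo_of_mem_Icc (x := sSup (K ∩ Iic c))
    ⟨hmono hc.1, hmono hc.2⟩ with h | h | h
  · exact (congrArg γ h).trans ha
  · exact (congrArg γ h).trans hb
  · exact absurd h (hgap.notMem_of_mem_left (hK.1.sSup_mem c).1)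

theorem exists_continuous_ordConnected_fibers [DenselyOrdered α] [TopologicalSpace X] [T2Space X]
    {γ : α → X} (hγ : Continuous γ) :
    ∃ g : α → X, Continuous g ∧ g ⊥ = γ ⊥ ∧ g ⊤ = γ ⊤ ∧ range g ⊆ range γ ∧
      ∀ x, OrdConnected (g ⁻¹' {x}) := by
  obtain ⟨K, hK⟩ := exists_minimal_isShortcut hγ
  exact ⟨freeze γ K, hK.1.continuous_freeze hγ, freeze_of_mem γ hK.1.bot_mem,
    freeze_of_mem γ hK.1.top_mem, range_subset_iff.2 fun _ => mem_range_self _,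
    IsShortcut.ordConnected_preimage_freeze hK⟩

end Shortcut

section Reparametrization

variable {X : Type*}

/-- How far `g` moves away from `g q` between the times `q` and `t`; zero for `t ≤ q`. -/
noncomputable def excursion [PseudoMetricSpace X] (g : I → X) (q t : I) : ℝ :=
  ⨆ x : I, dist (g q) (g (max q (min x t)))

section PseudoMetric

variable [PseudoMetricSpace X] {g : I → X}

theorem continuous_excursion (hg : Continuous g) :
    Continuous fun p : I × I => excursion g p.1 p.2 := by
  have hsup := isCompact_univ.continuous_sSup
    (f := fun (p : I × I) (x : I) => dist (g p.1) (g (max p.1 (min x p.2)))) (by fun_prop)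
  simpa only [excursion, image_univ, sSup_range] using hsup

theorem bddAbove_dist_max_min (hg : Continuous g) (q t : I) :
    BddAbove (range fun x : I => dist (g q) (g (max q (min x t)))) :=
  (isCompact_range (by fun_prop)).bddAbove

theorem dist_le_excursion (hg : Continuous g) {q s t : I} (hqs : q ≤ s) (hst : s ≤ t) :
    dist (g q) (g s) ≤ excursion g q t := by
  simpa only [excursion, min_eq_left hst, max_eq_right hqs] using
    le_ciSup (bddAbove_dist_max_min hg q t) s

theorem excursion_self (g : I → X) (q : I) : excursion g q q = 0 := by
  simp [excursion]

theorem excursion_mono (hg : Continuous g) (q : I) : Monotone (excursion g q) := fun s t hst =>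
  ciSup_le fun x => by
    simpa only [excursion, min_assoc, min_eq_left hst] using
      le_ciSup (bddAbove_dist_max_min hg q t) (min x s)

theorem excursion_eq_of_eqOn_Icc {q s t : I} (hst : s ≤ t) (h : ∀ u ∈ Icc s t, g u = g s) :
    excursion g q s = excursion g q t := by
  refine iSup_congr fun x => congrArg (dist (g q)) ?_
  rcases le_total x s with hxs | hsx
  · rw [min_eq_left hxs, min_eq_left (hxs.trans hst)]
  have hx : min x t ∈ Icc s t := ⟨le_min hsx hst, min_le_right x t⟩
  rw [min_eq_right hsx]
  rcases le_total q s with hqs | hsq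
  · rw [max_eq_right hqs, max_eq_right (hqs.trans hx.1), h _ hx]
  rcases le_total q (min x t) with hqx | hxq
  · rw [max_eq_left hsq, max_eq_right hqx, h _ hx, h q ⟨hsq, hqx.trans hx.2⟩]
  · rw [max_eq_left hsq, max_eq_left hxq]

/-- The total excursion of `g` up to time `t`, averaged over the starting time. -/
noncomputable def meanExcursion (g : I → X) (t : I) : ℝ :=
  ∫ q in (0 : ℝ)..1, excursion g (projIcc 0 1 zero_le_one q) t

theorem continuous_excursion_projIcc (hg : Continuous g) :
    Continuous fun p : I × ℝ => excursion g (projIcc 0 1 zero_le_one p.2) p.1 :=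
  (continuous_excursion hg).comp
    (((continuous_projIcc (h := zero_le_one)).comp continuous_snd).prodMk continuous_fst)

theorem continuous_meanExcursion (hg : Continuous g) : Continuous (meanExcursion g) :=
  intervalIntegral.continuous_parametric_intervalIntegral_of_continuous'
    (continuous_excursion_projIcc hg) 0 1

theorem meanExcursion_mono (hg : Continuous g) : Monotone (meanExcursion g) := fun s t hst =>
  intervalIntegral.integral_mono zero_le_one
    ((continuous_excursion_projIcc hg).comp (.prodMk_right s) |>.intervalIntegrable 0 1)
    ((continuous_excursion_projIcc hg).comp (.prodMk_right t) |>.intervalIntegrable 0 1)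
    fun _ => excursion_mono hg _ hst

theorem meanExcursion_eq_of_eqOn_Icc {s t : I} (hst : s ≤ t) (h : ∀ u ∈ Icc s t, g u = g s) :
    meanExcursion g s = meanExcursion g t :=
  congrArg (intervalIntegral · 0 1 MeasureTheory.volume)
    (funext fun _ => excursion_eq_of_eqOn_Icc hst h)

end PseudoMetric

variable [MetricSpace X] {g : I → X}

theorem meanExcursion_lt (hg : Continuous g) {s t : I} (hst : s ≤ t) (hne : g s ≠ g t) :
    meanExcursion g s < meanExcursion g t := by
  have hcont (u : I) : Continuous fun q : ℝ => excursion g (projIcc 0 1 zero_le_one q) u :=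
    (continuous_excursion_projIcc hg).comp (.prodMk_right u)
  refine intervalIntegral.integral_lt_integral_of_continuousOn_of_le_of_exists_lt zero_lt_one
    (hcont s).continuousOn (hcont t).continuousOn (fun _ _ => excursion_mono hg _ hst)
    ⟨s, s.2, ?_⟩
  rw [projIcc_val, excursion_self]
  exact (dist_pos.2 hne).trans_le (dist_le_excursion hg hst le_rfl)

theorem meanExcursion_eq_iff (hg : Continuous g) (hfib : ∀ x, OrdConnected (g ⁻¹' {x})) {s t : I} :
    meanExcursion g s = meanExcursion g t ↔ g s = g t := by
  wlog hst : s ≤ t generalizing s t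
  · rw [eq_comm, this (le_of_not_ge hst), eq_comm]
  refine ⟨fun h => by_contra fun hne => (meanExcursion_lt hg hst hne).ne h, fun h => ?_⟩
  exact meanExcursion_eq_of_eqOn_Icc hst fun u hu => (hfib (g s)).out rfl h.symm hu

theorem exists_continuous_surjective_eq_iff (hg : Continuous g)
    (hfib : ∀ x, OrdConnected (g ⁻¹' {x})) (hne : g 0 ≠ g 1) :
    ∃ θ : C(I, I), Function.Surjective θ ∧ θ 0 = 0 ∧ θ 1 = 1 ∧ ∀ s t, θ s = θ t ↔ g s = g t := by
  have hlt : meanExcursion g 0 < meanExcursion g 1 := meanExcursion_lt hg zero_le_one hne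
  have hmem (t : I) : meanExcursion g t ∈ Icc (meanExcursion g 0) (meanExcursion g 1) :=
    ⟨meanExcursion_mono hg unitInterval.nonneg', meanExcursion_mono hg unitInterval.le_one'⟩
  let e := iccHomeoI (meanExcursion g 0) (meanExcursion g 1) hlt
  let θ : C(I, I) := ⟨fun t => e ⟨meanExcursion g t, hmem t⟩,
    e.continuous.comp ((continuous_meanExcursion hg).subtype_mk hmem)⟩
  have h0 : θ 0 = 0 := Subtype.ext (by simp [θ, e])
  have h1 : θ 1 = 1 := Subtype.ext (by simp [θ, e, (sub_pos.2 hlt).ne'])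
  refine ⟨θ, fun u => ?_, h0, h1, fun s t => ?_⟩
  · exact mem_range_of_exists_le_of_exists_ge θ.continuous ⟨0, h0.trans_le unitInterval.nonneg'⟩
      ⟨1, unitInterval.le_one'.trans_eq h1.symm⟩
  · rw [← meanExcursion_eq_iff hg hfib]
    exact e.injective.eq_iff.trans Subtype.mk_eq_mk

/-- `A` is an arc with ends `a` and `b`. -/
def IsArc {X : Type*} [TopologicalSpace X] (a b : X) (A : Set X) : Prop :=
  ∃ γ : Path a b, Function.Injective γ ∧ range γ = A

theorem isArc_range_of_ordConnected_fibers (hg : Continuous g)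
    (hfib : ∀ x, OrdConnected (g ⁻¹' {x})) (hne : g 0 ≠ g 1) : IsArc (g 0) (g 1) (range g) := by
  obtain ⟨θ, hθ, h0, h1, hθg⟩ := exists_continuous_surjective_eq_iff hg hfib hne
  have hquot : IsQuotientMap θ := .of_surjective_continuous hθ θ.continuous
  obtain ⟨γ, hγ⟩ : ∃ γ : C(I, X), ∀ t, γ (θ t) = g t :=
    ⟨hquot.lift ⟨g, hg⟩ fun s t h => (hθg s t).1 h,
      DFunLike.congr_fun (hquot.lift_comp ⟨g, hg⟩ fun s t h => (hθg s t).1 h)⟩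
  refine ⟨⟨γ, (congrArg γ h0).symm.trans (hγ 0), (congrArg γ h1).symm.trans (hγ 1)⟩,
    fun u v huv => ?_, ?_⟩
  · obtain ⟨s, rfl⟩ := hθ u
    obtain ⟨t, rfl⟩ := hθ v
    exact (hθg s t).2 ((hγ s).symm.trans (huv.trans (hγ t)))
  · exact (hθ.range_comp γ).symm.trans (congrArg range (funext hγ))

theorem exists_isArc_of_joinedIn {W : Set X} {p q : X} (h : JoinedIn W p q) (hpq : p ≠ q) :
    ∃ A ⊆ W, IsArc p q A := by
  obtain ⟨γ, hγ⟩ := h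
  obtain ⟨g, hg, h0, h1, hgγ, hfib⟩ := exists_continuous_ordConnected_fibers γ.continuous
  replace h0 : g 0 = p := h0.trans γ.source
  replace h1 : g 1 = q := h1.trans γ.target
  subst h0 h1
  exact ⟨range g, hgγ.trans (range_subset_iff.2 hγ), isArc_range_of_ordConnected_fibers hg hfib hpq⟩

end Reparametrization

section Arc

variable {X : Type*} [TopologicalSpace X] {a b p : X} {A : Set X}

theorem IsArc.left_mem (h : IsArc a b A) : a ∈ A := by
  obtain ⟨γ, -, rfl⟩ := h
  exact ⟨0, γ.source⟩

theorem IsArc.right_mem (h : IsArc a b A) : b ∈ A := by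
  obtain ⟨γ, -, rfl⟩ := h
  exact ⟨1, γ.target⟩

theorem subpath_injective {γ : Path a b} (hγ : Function.Injective γ) {s t : I} (hst : s ≠ t) :
    Function.Injective (γ.subpath s t) := by
  refine hγ.comp fun u v huv => Subtype.ext ?_
  have hcomb : (1 - u : ℝ) * s + u * t = (1 - v) * s + v * t := congrArg Subtype.val huv
  have hts : (t - s : ℝ) ≠ 0 := sub_ne_zero.2 fun h => hst (Subtype.ext h.symm)
  exact mul_right_cancel₀ hts (by linear_combination hcomb)

theorem isArc_image_Icc {γ : Path a b} (hγ : Function.Injective γ) {s t : I} (hst : s < t) :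
    IsArc (γ s) (γ t) (γ '' Icc s t) :=
  ⟨γ.subpath s t, subpath_injective hγ hst.ne, γ.range_subpath_of_le s t hst.le⟩

theorem IsArc.exists_split (h : IsArc a b A) (hp : p ∈ A) (hpa : p ≠ a) (hpb : p ≠ b) :
    ∃ A₁ A₂, IsArc a p A₁ ∧ IsArc p b A₂ ∧ A₁ ∪ A₂ = A ∧ A₁ ∩ A₂ = {p} := by
  obtain ⟨γ, hγ, rfl⟩ := h
  obtain ⟨t, rfl⟩ := hp
  have ht0 : 0 < t := unitInterval.pos_iff_ne_zero.2 fun h => hpa (h ▸ γ.source)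
  have ht1 : t < 1 := unitInterval.lt_one_iff_ne_one.2 fun h => hpb (h ▸ γ.target)
  refine ⟨γ '' Icc 0 t, γ '' Icc t 1, by simpa using isArc_image_Icc hγ ht0,
    by simpa using isArc_image_Icc hγ ht1, ?_, ?_⟩
  · rw [← image_union, Icc_union_Icc_eq_Icc ht0.le ht1.le, ← image_univ]
    exact congrArg _ Icc_bot_top
  · rw [← image_inter hγ, Icc_inter_Icc_eq_singleton ht0.le ht1.le, image_singleton]

end Arc

section Graph

variable {X : Type*} [TopologicalSpace X] {V Y A : Set X} {E : Set (Set X)} {a b p : X}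

/-- A presentation of `Y` as a finite graph with vertex set `V` in which, unlike in
`IsFiniteTopGraph`, the edges form a set of arcs instead of an indexed family of
parametrizations. -/
structure IsGraphDecomposition (V : Set X) (E : Set (Set X)) (Y : Set X) : Prop where
  finite_vertices : V.Finite
  finite_edges : E.Finite
  isArc_of_mem : ∀ A ∈ E, ∃ a ∈ V, ∃ b ∈ V, IsArc a b A ∧ A ∩ V ⊆ {a, b}
  pairwise_inter_subset : E.Pairwise fun A B => A ∩ B ⊆ V
  union_eq : V ∪ ⋃₀ E = Y

theorem IsGraphDecomposition.isFiniteTopGraph (h : IsGraphDecomposition V E Y) :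
    IsFiniteTopGraph Y := by
  obtain ⟨n, e, he_inj, rfl⟩ := h.finite_edges.fin_param
  choose a ha b hb harc hV using fun i => h.isArc_of_mem (e i) (mem_range_self i)
  choose γ hγ hrange using harc
  refine ⟨h.finite_vertices.toFinset, n, fun i => (γ i).toContinuousMap, hγ, fun i => ?_,
    fun i t ht => ?_, fun i j hij x hi hj => ?_, ?_⟩
  · simpa using ⟨ha i, hb i⟩
  · have hmem : γ i t ∈ e i ∩ V :=
      ⟨hrange i ▸ mem_range_self t, h.finite_vertices.mem_toFinset.1 ht⟩
    exact (hV i hmem).imp (fun h => hγ i (h.trans (γ i).source.symm))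
      fun h => hγ i (h.trans (γ i).target.symm)
  · have hdisj := h.pairwise_inter_subset (mem_range_self i) (mem_range_self j) (he_inj.ne hij)
    rw [← hrange i, ← hrange j] at hdisj
    exact h.finite_vertices.mem_toFinset.2 (hdisj ⟨hi, hj⟩)
  · have hedges : ⋃ i, range ((γ i).toContinuousMap) = ⋃ i, e i := iUnion_congr hrange
    rw [hedges, h.finite_vertices.coe_toFinset, ← sUnion_range, h.union_eq]

theorem isFiniteTopGraph_iff :
    IsFiniteTopGraph Y ↔ ∃ V E, IsGraphDecomposition V E Y := by
  refine ⟨?_, fun ⟨V, E, h⟩ => h.isFiniteTopGraph⟩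
  rintro ⟨V, n, e, hinj, hends, hint, hdisj, rfl⟩
  refine ⟨V, range fun i => range (e i), V.finite_toSet, finite_range _, ?_, ?_, by
    rw [sUnion_range]⟩
  · rintro _ ⟨i, rfl⟩
    refine ⟨e i 0, (hends i).1, e i 1, (hends i).2, ⟨⟨e i, rfl, rfl⟩, hinj i, rfl⟩, ?_⟩
    rintro _ ⟨⟨t, rfl⟩, ht⟩
    exact (hint i t ht).imp (congrArg (e i)) (congrArg (e i))
  · rintro _ ⟨i, rfl⟩ _ ⟨j, rfl⟩ hij x ⟨hi, hj⟩
    exact hdisj i j (fun h => hij (h ▸ rfl)) x hi hj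

theorem isFiniteTopGraph_of_finite (hY : Y.Finite) : IsFiniteTopGraph Y :=
  IsGraphDecomposition.isFiniteTopGraph (V := Y) (E := ∅)
    ⟨hY, finite_empty, by simp, pairwise_empty _, by simp⟩

theorem IsGraphDecomposition.split_edge {A₁ A₂ : Set X} (h : IsGraphDecomposition V E Y)
    (hA : A₁ ∪ A₂ ∈ E) (ha : a ∈ V) (hb : b ∈ V) (hAV : (A₁ ∪ A₂) ∩ V ⊆ {a, b})
    (harc₁ : IsArc a p A₁) (harc₂ : IsArc p b A₂) (hinter : A₁ ∩ A₂ = {p}) (hp : p ∉ V) :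
    IsGraphDecomposition (insert p V) (insert A₁ (insert A₂ (E \ {A₁ ∪ A₂}))) Y := by
  have hinter_eq {x : X} (h₁ : x ∈ A₁) (h₂ : x ∈ A₂) : x = p := hinter.subset ⟨h₁, h₂⟩
  have hother {B : Set X} (hB : B ∈ E \ {A₁ ∪ A₂}) : (A₁ ∪ A₂) ∩ B ⊆ V :=
    h.pairwise_inter_subset hA hB.1 (Ne.symm hB.2)
  refine ⟨h.finite_vertices.insert p, ((h.finite_edges.sdiff).insert A₂).insert A₁, ?_, ?_, ?_⟩
  · rintro B (rfl | rfl | hB)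
    · refine ⟨a, .inr ha, p, .inl rfl, harc₁, ?_⟩
      rintro x ⟨hxB, rfl | hxV⟩
      · exact .inr rfl
      · exact (hAV ⟨.inl hxB, hxV⟩).imp id fun hxb : x = b =>
          hinter_eq hxB (hxb ▸ harc₂.right_mem)
    · refine ⟨p, .inl rfl, b, .inr hb, harc₂, ?_⟩
      rintro x ⟨hxB, rfl | hxV⟩
      · exact .inl rfl
      · exact (hAV ⟨.inr hxB, hxV⟩).imp
          (fun hxa : x = a => hinter_eq (hxa ▸ harc₁.left_mem) hxB) id
    · obtain ⟨c, hc, d, hd, harcB, hBV⟩ := h.isArc_of_mem B hB.1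
      refine ⟨c, .inr hc, d, .inr hd, harcB, ?_⟩
      rintro x ⟨hxB, rfl | hxV⟩
      · exact absurd (hother hB ⟨.inl harc₁.right_mem, hxB⟩) hp
      · exact hBV ⟨hxB, hxV⟩
  · have : Std.Symm fun B C : Set X => B ∩ C ⊆ insert p V := ⟨fun B C h => inter_comm B C ▸ h⟩
    refine Pairwise.insert_of_symm (Pairwise.insert_of_symm
      (fun B hB C hC hBC => ?_) fun B hB _ => ?_) ?_
    · exact (h.pairwise_inter_subset hB.1 hC.1 hBC).trans (subset_insert p V)
    · exact fun x hx => .inr (hother hB ⟨.inr hx.1, hx.2⟩)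
    · rintro B (rfl | hB) _
      · exact hinter.subset.trans (singleton_subset_iff.2 (mem_insert p V))
      · exact fun x hx => .inr (hother hB ⟨.inl hx.1, hx.2⟩)
  · have hpY : p ∈ V ∪ ⋃₀ E := .inr ⟨_, hA, .inl harc₁.right_mem⟩
    rw [sUnion_insert, sUnion_insert, ← union_assoc A₁, ← sUnion_insert, insert_sdiff_singleton,
      insert_eq_of_mem hA, insert_union, insert_eq_of_mem hpY, h.union_eq]

theorem IsGraphDecomposition.exists_insert_vertex (h : IsGraphDecomposition V E Y) (hp : p ∈ Y) :
    ∃ E', IsGraphDecomposition (insert p V) E' Y := by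
  by_cases hpV : p ∈ V
  · exact ⟨E, by rwa [insert_eq_of_mem hpV]⟩
  obtain ⟨A, hA, hpA⟩ : ∃ A ∈ E, p ∈ A := by
    rw [← h.union_eq] at hp
    exact hp.resolve_left hpV
  obtain ⟨a, ha, b, hb, harc, hAV⟩ := h.isArc_of_mem A hA
  obtain ⟨A₁, A₂, harc₁, harc₂, rfl, hinter⟩ :=
    harc.exists_split hpA (fun h => hpV (h ▸ ha)) fun h => hpV (h ▸ hb)
  exact ⟨_, h.split_edge hA ha hb hAV harc₁ harc₂ hinter hpV⟩

theorem IsFiniteTopGraph.union_isArc (hY : IsFiniteTopGraph Y) (hA : IsArc a b A) (ha : a ∈ Y)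
    (hb : b ∈ Y) (hAY : A ∩ Y ⊆ {a, b}) : IsFiniteTopGraph (Y ∪ A) := by
  obtain ⟨V, E, hVE⟩ := isFiniteTopGraph_iff.1 hY
  obtain ⟨E, hVE⟩ := hVE.exists_insert_vertex ha
  obtain ⟨E, hVE⟩ := hVE.exists_insert_vertex hb
  have hVY : insert b (insert a V) ⊆ Y := subset_union_left.trans_eq hVE.union_eq
  have hEY {B : Set X} (hB : B ∈ E) : B ⊆ Y :=
    ((subset_sUnion_of_mem hB).trans subset_union_right).trans_eq hVE.union_eq
  have haV : a ∈ insert b (insert a V) := by simp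
  have hbV : b ∈ insert b (insert a V) := by simp
  have hab : {a, b} ⊆ insert b (insert a V) := pair_subset haV hbV
  refine IsGraphDecomposition.isFiniteTopGraph (V := insert b (insert a V)) (E := insert A E)
    ⟨hVE.finite_vertices, hVE.finite_edges.insert A, ?_, ?_, ?_⟩
  · rintro B (rfl | hB)
    · exact ⟨a, haV, b, hbV, hA, (inter_subset_inter_right _ hVY).trans hAY⟩
    · exact hVE.isArc_of_mem B hB
  · have : Std.Symm fun B C : Set X => B ∩ C ⊆ insert b (insert a V) :=
      ⟨fun B C h => inter_comm B C ▸ h⟩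
    refine hVE.pairwise_inter_subset.insert_of_symm fun B hB _ => ?_
    exact ((inter_subset_inter_right A (hEY hB)).trans hAY).trans hab
  · rw [sUnion_insert, union_left_comm, hVE.union_eq, union_comm]

end Graph

section Pieces

variable {X : Type*} [MetricSpace X] {a b : X} {Y : Set X} {η : ℝ}

/-- A closed path-connected set of diameter at most `η`, the distances being strictly smaller than
`η`. A finite graph is cut into finitely many of these, so that a path meeting it can be replaced
by one that enters each of them at most once. -/
structure IsSmallPiece (η : ℝ) (P : Set X) : Prop where
  isClosed : IsClosed P
  isPathConnected : IsPathConnected P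
  dist_lt : ∀ x ∈ P, ∀ y ∈ P, dist x y < η

theorem exists_isSmallPiece_cover_range (γ : Path a b) (hη : 0 < η) :
    ∃ L : Set (Set X), L.Finite ∧ (∀ P ∈ L, IsSmallPiece η P) ∧ ⋃₀ L = range γ := by
  have : PathConnectedSpace I := isPathConnected_iff_pathConnectedSpace.1
    ((convex_Icc (0 : ℝ) 1).isPathConnected ⟨0, unitInterval.zero_mem⟩)
  have hloc (t : I) : ∃ u v, t ∈ Icc u v ∧ Icc u v ∈ 𝓝 t ∧
      Icc u v ⊆ γ ⁻¹' Metric.ball (γ t) (η / 2) :=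
    exists_Icc_mem_subset_of_mem_nhds
      (γ.continuous.continuousAt (Metric.ball_mem_nhds _ (half_pos hη)))
  choose u v hmem hnhds hball using hloc
  obtain ⟨T, -, hT⟩ := isCompact_univ.elim_nhds_subcover (fun t => Icc (u t) (v t))
    fun t _ => hnhds t
  refine ⟨(fun t => γ '' Icc (u t) (v t)) '' T, T.finite_toSet.image _, ?_, ?_⟩
  · rintro _ ⟨t, -, rfl⟩
    refine ⟨(isCompact_Icc.image γ.continuous).isClosed, ?_, ?_⟩
    · beta_reduce
      rw [← γ.range_subpath_of_le _ _ ((hmem t).1.trans (hmem t).2)]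
      exact isPathConnected_range (γ.subpath _ _).continuous
    · rintro _ ⟨x, hx, rfl⟩ _ ⟨y, hy, rfl⟩
      calc dist (γ x) (γ y) ≤ dist (γ x) (γ t) + dist (γ y) (γ t) := dist_triangle_right ..
        _ < η / 2 + η / 2 := add_lt_add (hball t hx) (hball t hy)
        _ = η := add_halves η
  · have hcover : ⋃ t ∈ (T : Set I), Icc (u t) (v t) = univ := univ_subset_iff.1 hT
    rw [sUnion_image, ← image_iUnion₂, hcover, image_univ]

theorem IsFiniteTopGraph.exists_isSmallPiece_cover (hY : IsFiniteTopGraph Y) (hη : 0 < η) :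
    ∃ L : Set (Set X), L.Finite ∧ (∀ P ∈ L, IsSmallPiece η P) ∧ ⋃₀ L = Y := by
  obtain ⟨V, n, e, -, -, -, -, rfl⟩ := hY
  have hedge (i : Fin n) : ∃ L : Set (Set X), L.Finite ∧ (∀ P ∈ L, IsSmallPiece η P) ∧
      ⋃₀ L = range (e i) :=
    exists_isSmallPiece_cover_range (a := e i 0) (b := e i 1) ⟨e i, rfl, rfl⟩ hη
  choose L hfin hL hunion using hedge
  refine ⟨singleton '' V ∪ ⋃ i, L i, (V.finite_toSet.image _).union (finite_iUnion hfin), ?_, ?_⟩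
  · rintro P (⟨x, -, rfl⟩ | hP)
    · exact ⟨isClosed_singleton, isPathConnected_singleton x, by simpa⟩
    · obtain ⟨i, hi⟩ := mem_iUnion.1 hP
      exact hL i P hi
  · simp only [sUnion_union, sUnion_image, sUnion_iUnion, hunion, biUnion_of_singleton]

end Pieces

section Reroute

variable {X : Type*} [MetricSpace X] {a b : X} {Y P : Set X} {γ : Path a b} {s s₁ t₁ t : I} {η : ℝ}

/-- `β` replaces the part of `γ` between the times `s` and `t`: it uses only points of the graph `Y`
and of that part of `γ`, stays `η`-close to `γ`, and its union with `Y` is again a graph. -/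
structure IsReroute (η : ℝ) (Y : Set X) (γ : Path a b) (s t : I) (β : Path (γ s) (γ t)) :
    Prop where
  isFiniteTopGraph : IsFiniteTopGraph (Y ∪ range β)
  range_subset : range β ⊆ Y ∪ γ '' Icc s t
  range_subset_thickening : range β ⊆ Metric.thickening η (range γ)

theorem isReroute_subpath (hη : 0 < η) (hY : IsFiniteTopGraph Y) (hγ : Function.Injective γ)
    (hst : s ≤ t) (hs : γ s ∈ Y) (ht : γ t ∈ Y) (hdisj : ∀ x ∈ Ioo s t, γ x ∉ Y) :
    IsReroute η Y γ s t (γ.subpath s t) := by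
  have hrange := γ.range_subpath_of_le s t hst
  refine ⟨?_, hrange.subset.trans subset_union_right, hrange.subset.trans
    ((image_subset_range _ _).trans (Metric.self_subset_thickening hη _))⟩
  rw [hrange]
  rcases hst.eq_or_lt with rfl | hlt
  · rwa [Icc_self, image_singleton, union_eq_self_of_subset_right (singleton_subset_iff.2 hs)]
  · refine hY.union_isArc (isArc_image_Icc hγ hlt) hs ht ?_
    rintro _ ⟨⟨x, hx, rfl⟩, hxY⟩
    rcases eq_endpoints_or_mem_Ioo_of_mem_Icc hx with rfl | rfl | hx
    · exact .inl rfl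
    · exact .inr rfl
    · exact absurd hxY (hdisj x hx)

theorem IsReroute.splice (hP : IsSmallPiece η P) (hPY : P ⊆ Y) (hs : s ≤ s₁) (hst : s₁ ≤ t₁)
    (ht : t₁ ≤ t) {β₁ : Path (γ s) (γ s₁)} (h₁ : IsReroute η Y γ s s₁ β₁)
    {δ : Path (γ s₁) (γ t₁)} (hδ : range δ ⊆ P) {β₂ : Path (γ t₁) (γ t)}
    (h₂ : IsReroute η (Y ∪ range β₁) γ t₁ t β₂) :
    IsReroute η Y γ s t ((β₁.trans δ).trans β₂) := by
  have hleft : γ '' Icc s s₁ ⊆ γ '' Icc s t := image_mono (Icc_subset_Icc_right (hst.trans ht))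
  have hright : γ '' Icc t₁ t ⊆ γ '' Icc s t := image_mono (Icc_subset_Icc_left (hs.trans hst))
  have hβ₁ : range β₁ ⊆ Y ∪ γ '' Icc s t :=
    h₁.range_subset.trans (union_subset_union_right Y hleft)
  refine ⟨?_, ?_, ?_⟩ <;> rw [Path.trans_range, Path.trans_range]
  · have hunion : Y ∪ (range β₁ ∪ range δ ∪ range β₂) = Y ∪ range β₁ ∪ range β₂ := by
      rw [← union_assoc, ← union_assoc, union_right_comm Y,
        union_eq_self_of_subset_right (hδ.trans hPY)]
    exact hunion ▸ h₂.isFiniteTopGraph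
  · refine union_subset (union_subset hβ₁ ((hδ.trans hPY).trans subset_union_left)) ?_
    exact h₂.range_subset.trans
      (union_subset (union_subset subset_union_left hβ₁) (hright.trans subset_union_right))
  · refine union_subset (union_subset h₁.range_subset_thickening fun x hx => ?_)
      h₂.range_subset_thickening
    exact Metric.mem_thickening_iff.2
      ⟨γ s₁, mem_range_self s₁, hP.dist_lt x (hδ hx) _ (hδ ⟨0, δ.source⟩)⟩

/-- Induction on the pieces: between its first and its last visit to a piece, the path can be
replaced by a path in that piece. -/
theorem exists_isReroute (hη : 0 < η) (hγ : Function.Injective γ) {L : Set (Set X)}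
    (hL : L.Finite) (hpiece : ∀ P ∈ L, IsSmallPiece η P) (hY : IsFiniteTopGraph Y)
    (hLY : ⋃₀ L ⊆ Y) (hst : s ≤ t) (hs : γ s ∈ Y) (ht : γ t ∈ Y)
    (hcover : ∀ x ∈ Ioo s t, γ x ∈ Y → γ x ∈ ⋃₀ L) :
    ∃ β, IsReroute η Y γ s t β := by
  induction L, hL using Set.Finite.induction_on generalizing Y s t with
  | empty =>
    exact ⟨_, isReroute_subpath hη hY hγ hst hs ht fun x hx hxY => by simpa using hcover x hx hxY⟩
  | @insert P L _ _ ih =>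
    have hpieceL : ∀ Q ∈ L, IsSmallPiece η Q := fun Q hQ => hpiece Q (.inr hQ)
    have hP : IsSmallPiece η P := hpiece P (.inl rfl)
    rw [sUnion_insert, union_subset_iff] at hLY
    have hvisit {x : I} (hx : x ∈ Ioo s t) (hxY : γ x ∈ Y) (hxP : γ x ∉ P) : γ x ∈ ⋃₀ L :=
      (sUnion_insert P L ▸ hcover x hx hxY).resolve_left hxP
    have hcompact : IsCompact (Icc s t ∩ γ ⁻¹' P) :=
      isCompact_Icc.inter_right (hP.isClosed.preimage γ.continuous)
    rcases (Icc s t ∩ γ ⁻¹' P).eq_empty_or_nonempty with hempty | hne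
    · exact ih hpieceL hY hLY.2 hst hs ht fun x hx hxY => hvisit hx hxY fun hxP =>
        hempty.subset ⟨Ioo_subset_Icc_self hx, hxP⟩
    obtain ⟨s₁, ⟨⟨hs₁, -⟩, hs₁P⟩, hfirst⟩ := hcompact.exists_isLeast hne
    obtain ⟨t₁, ⟨⟨hs₁', ht₁⟩, ht₁P⟩, hlast⟩ := hcompact.exists_isGreatest hne
    have hst₁ : s₁ ≤ t₁ := hfirst ⟨⟨hs₁', ht₁⟩, ht₁P⟩
    obtain ⟨β₁, hβ₁⟩ := ih hpieceL hY hLY.2 hs₁ hs (hLY.1 hs₁P) fun x hx hxY =>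
      hvisit ⟨hx.1, hx.2.trans_le (hst₁.trans ht₁)⟩ hxY fun hxP =>
        hx.2.not_ge (hfirst ⟨⟨hx.1.le, (hx.2.le.trans hst₁).trans ht₁⟩, hxP⟩)
    obtain ⟨β₂, hβ₂⟩ := ih hpieceL hβ₁.isFiniteTopGraph (hLY.2.trans subset_union_left) ht₁
      (.inl (hLY.1 ht₁P)) (.inl ht) fun x hx hxY => by
        have hxY : γ x ∈ Y := by
          refine (union_subset subset_union_left hβ₁.range_subset hxY).resolve_right ?_
          rintro ⟨y, hy, hyx⟩
          exact (hy.2.trans hst₁).not_gt (hγ hyx ▸ hx.1)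
        exact hvisit ⟨hs₁'.trans_lt hx.1, hx.2⟩ hxY fun hxP =>
          hx.1.not_ge (hlast ⟨⟨hs₁'.trans hx.1.le, hx.2.le⟩, hxP⟩)
    obtain ⟨δ, hδ⟩ := hP.isPathConnected.joinedIn _ hs₁P _ ht₁P
    exact ⟨_, .splice hP hLY.1 hs₁ hst₁ ht₁ hβ₁ (range_subset_iff.2 hδ) hβ₂⟩

end Reroute

section Extension

variable {X : Type*} [MetricSpace X] {η : ℝ}

theorem IsFiniteTopGraph.exists_path_union {Y W : Set X} {p q : X} (hY : IsFiniteTopGraph Y)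
    (hη : 0 < η) (hp : p ∈ Y) (hq : q ∈ Y) (h : JoinedIn W p q) :
    ∃ β : Path p q, IsFiniteTopGraph (Y ∪ range β) ∧ range β ⊆ Metric.thickening η W := by
  rcases eq_or_ne p q with rfl | hpq
  · refine ⟨Path.refl p, ?_, ?_⟩ <;> rw [Path.refl_range]
    · rwa [union_eq_self_of_subset_right (singleton_subset_iff.2 hp)]
    · exact singleton_subset_iff.2 (Metric.self_subset_thickening hη W h.source_mem)
  obtain ⟨A, hAW, γ, hγ, rfl⟩ := exists_isArc_of_joinedIn h hpq
  obtain ⟨L, hL, hpiece, hLY⟩ := hY.exists_isSmallPiece_cover hη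
  obtain ⟨β, hβ⟩ := exists_isReroute hη hγ hL hpiece hY hLY.subset zero_le_one
    (by rwa [γ.source]) (by rwa [γ.target]) fun x _ hx => hLY ▸ hx
  exact ⟨β.cast γ.source.symm γ.target.symm, hβ.isFiniteTopGraph,
    hβ.range_subset_thickening.trans (Metric.thickening_subset_of_subset η hAW)⟩

theorem exists_paths_isFiniteTopGraph {ι : Type*} [Finite ι] {S : Set X} (hS : S.Finite)
    {p q : ι → X} {W : ι → Set X} (hp : ∀ i, p i ∈ S) (hq : ∀ i, q i ∈ S)
    (hW : ∀ i, JoinedIn (W i) (p i) (q i)) (hη : 0 < η) :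
    ∃ β : ∀ i, Path (p i) (q i), IsFiniteTopGraph (S ∪ ⋃ i, range (β i)) ∧
      ∀ i, range (β i) ⊆ Metric.thickening η (W i) := by
  classical
  have := Fintype.ofFinite ι
  suffices h : ∀ T : Finset ι, ∃ β : ∀ i, Path (p i) (q i),
      IsFiniteTopGraph (S ∪ ⋃ i ∈ T, range (β i)) ∧
        ∀ i ∈ T, range (β i) ⊆ Metric.thickening η (W i) by
    simpa using h Finset.univ
  intro T
  induction T using Finset.induction_on with
  | empty => exact ⟨fun i => (hW i).somePath, by simpa using isFiniteTopGraph_of_finite hS, by simp⟩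
  | insert i T hi ih =>
    obtain ⟨β, hβ, hβW⟩ := ih
    obtain ⟨δ, hδ, hδW⟩ := hβ.exists_path_union hη (.inl (hp i)) (.inl (hq i)) (hW i)
    have hupdate {j : ι} (hj : j ∈ T) : Function.update β i δ j = β j :=
      Function.update_of_ne (ne_of_mem_of_not_mem hj hi) ..
    refine ⟨Function.update β i δ, ?_, ?_⟩
    · have hT : ⋃ j ∈ T, range (Function.update β i δ j) = ⋃ j ∈ T, range (β j) :=
        iUnion₂_congr fun j hj => by rw [hupdate hj]
      rwa [Finset.set_biUnion_insert, hT, Function.update_self, union_comm (range δ), ← union_assoc]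
    · refine Finset.forall_mem_insert _ _ _ |>.2 ⟨by rwa [Function.update_self], fun j hj => ?_⟩
      rw [hupdate hj]
      exact hβW j hj

end Extension

section Cover

variable {X : Type*} {ι : Type*} {n : ℕ}

theorem exists_minimal_subcover {V : Set (Set X)} (hV : V.Finite) (hcover : ⋃₀ V = univ) :
    ∃ T ⊆ V, ⋃₀ T = univ ∧ ∀ w ∈ T, ∃ p ∈ w, ∀ w' ∈ T, p ∈ w' → w' = w := by
  obtain ⟨T, ⟨hTV, hT⟩, hmin⟩ := Set.Finite.exists_minimal (s := {T | T ⊆ V ∧ ⋃₀ T = univ})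
    (hV.finite_subsets.subset fun T hT => hT.1) ⟨V, Subset.rfl, hcover⟩
  refine ⟨T, hTV, hT, fun w hw => ?_⟩
  by_contra! hshared
  have hdiff : ⋃₀ (T \ {w}) = univ := eq_univ_of_forall fun x => by
    obtain ⟨v, hv, hxv⟩ : x ∈ ⋃₀ T := hT ▸ mem_univ x
    rcases eq_or_ne v w with rfl | hvw
    · obtain ⟨w', hw', hxw', hne⟩ := hshared x hxv
      exact ⟨w', ⟨hw', hne⟩, hxw'⟩
    · exact ⟨v, ⟨hv, hvw⟩, hxv⟩
  exact (hmin ⟨sdiff_subset.trans hTV, hdiff⟩ sdiff_subset hw).2 rfl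

/-- The components of the members of a refinement of order at most `n + 1` again have order at most
`n + 1`, since each point lies in only one component of each member. -/
theorem CovDimLE.exists_isPreconnected_refinement [TopologicalSpace X] [CompactSpace X]
    [LocallyConnectedSpace X] (hdim : CovDimLE X n) {U : Set (Set X)} (hU : U.Finite)
    (hopen : ∀ u ∈ U, IsOpen u) (hcover : ⋃₀ U = univ) :
    ∃ W : Set (Set X), W.Finite ∧ (∀ w ∈ W, IsOpen w ∧ IsPreconnected w) ∧ ⋃₀ W = univ ∧
      (∀ w ∈ W, ∃ u ∈ U, w ⊆ u) ∧ ∀ x, {w ∈ W | x ∈ w}.ncard ≤ n + 1 := by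
  obtain ⟨V, hV, hVopen, hVcover, hVU, hord⟩ := hdim U hU hopen hcover
  have hmem (x : X) : ∃ v ∈ V, x ∈ v := by
    rw [← mem_sUnion, hVcover]
    trivial
  choose v hvV hxv using hmem
  obtain ⟨T, hT⟩ := CompactSpace.elim_nhds_subcover (fun x => connectedComponentIn (v x) x)
    fun x => (hVopen _ (hvV x)).connectedComponentIn.mem_nhds (mem_connectedComponentIn (hxv x))
  refine ⟨(fun x => connectedComponentIn (v x) x) '' T, T.finite_toSet.image _, ?_, ?_, ?_, ?_⟩
  · rintro _ ⟨x, -, rfl⟩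
    exact ⟨(hVopen _ (hvV x)).connectedComponentIn, isPreconnected_connectedComponentIn⟩
  · rw [sUnion_image]
    exact hT
  · rintro _ ⟨x, -, rfl⟩
    obtain ⟨u, hu, hvu⟩ := hVU _ (hvV x)
    exact ⟨u, hu, (connectedComponentIn_subset _ _).trans hvu⟩
  · intro x
    have hfin : {v ∈ V | x ∈ v}.Finite := hV.subset (sep_subset _ _)
    refine le_trans (ncard_le_ncard ?_ (hfin.image (connectedComponentIn · x)))
      ((ncard_image_le hfin).trans (hord x))
    rintro _ ⟨⟨y, -, rfl⟩, hxy⟩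
    exact ⟨v y, ⟨hvV y, connectedComponentIn_subset _ _ hxy⟩, (connectedComponentIn_eq hxy).symm⟩

/-- An open cover of order at most two by connected sets, together with a choice in each member of
a point `p i` that lies in no other member. -/
structure IsNerveCover [TopologicalSpace X] (U : ι → Set X) (p : ι → X) : Prop where
  isOpen (i : ι) : IsOpen (U i)
  isPreconnected (i : ι) : IsPreconnected (U i)
  exists_mem (x : X) : ∃ i, x ∈ U i
  mem (i : ι) : p i ∈ U i
  eq_of_mem {i k : ι} : p i ∈ U k → k = i
  eq_or_eq {x : X} {i j k : ι} : i ≠ j → x ∈ U i → x ∈ U j → x ∈ U k → k = i ∨ k = j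

theorem IsNerveCover.compl_nonempty [TopologicalSpace X] {U : ι → Set X} {p : ι → X} {i j : ι}
    (hU : IsNerveCover U p) (hij : i ≠ j) : (U i)ᶜ.Nonempty :=
  ⟨p j, fun h => hij (hU.eq_of_mem h)⟩

theorem IsNerveCover.mem_of_forall_eq [TopologicalSpace X] {U : ι → Set X} {p : ι → X} {x : X}
    {i : ι} (hU : IsNerveCover U p) (h : ∀ k, x ∈ U k → k = i) : x ∈ U i := by
  obtain ⟨k, hk⟩ := hU.exists_mem x
  exact h k hk ▸ hk

theorem CovDimLE.exists_isNerveCover [MetricSpace X] [CompactSpace X] [LocallyConnectedSpace X]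
    (hdim : CovDimLE X 1) {r : ℝ} (hr : 0 < r) :
    ∃ (m : ℕ) (U : Fin m → Set X) (p : Fin m → X), IsNerveCover U p ∧
      ∀ i, ∀ x ∈ U i, ∀ y ∈ U i, dist x y < r := by
  obtain ⟨C, hC⟩ := CompactSpace.elim_nhds_subcover (fun x : X => Metric.ball x (r / 2))
    fun x => Metric.ball_mem_nhds x (half_pos hr)
  obtain ⟨W, hW, hWopen, hWcover, hWball, hord⟩ :=
    hdim.exists_isPreconnected_refinement (U := (Metric.ball · (r / 2)) '' C)
      (C.finite_toSet.image _) (forall_mem_image.2 fun _ _ => Metric.isOpen_ball)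
      (by rw [sUnion_image]; exact hC)
  obtain ⟨T, hTW, hTcover, hpriv⟩ := exists_minimal_subcover hW hWcover
  obtain ⟨m, U, hinj, rfl⟩ := (hW.subset hTW).fin_param
  rw [forall_mem_range] at hpriv
  choose p hp hpriv using hpriv
  have hUW (i : Fin m) : U i ∈ W := hTW (mem_range_self i)
  refine ⟨m, U, p, ⟨fun i => (hWopen _ (hUW i)).1, fun i => (hWopen _ (hUW i)).2, fun x => ?_, hp,
    fun h => hinj (hpriv _ _ (mem_range_self _) h), fun {x i j k} hij hi hj hk => ?_⟩, ?_⟩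
  · rw [← mem_iUnion, ← sUnion_range, hTcover]
    trivial
  · by_contra! hne
    refine (hord x).not_gt ((two_lt_ncard_iff (hW.subset (sep_subset _ _))).2
      ⟨U i, U j, U k, ⟨hUW i, hi⟩, ⟨hUW j, hj⟩, ⟨hUW k, hk⟩, hinj.ne hij, hinj.ne hne.1.symm,
        hinj.ne hne.2.symm⟩)
  · intro i x hx y hy
    obtain ⟨_, ⟨c, -, rfl⟩, hic⟩ := hWball _ (hUW i)
    calc dist x y ≤ dist x c + dist y c := dist_triangle_right x y c
      _ < r / 2 + r / 2 := add_lt_add (hic hx) (hic hy)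
      _ = r := add_halves r

end Cover

section Nerve

variable {X ι : Type*} [TopologicalSpace X] [LinearOrder ι] {U : ι → Set X} {p : ι → X} {x : X}

/-- An edge of the nerve of the family `U`, oriented by the order of the index set. -/
@[ext]
structure NerveEdge (U : ι → Set X) where
  fst : ι
  snd : ι
  fst_lt_snd : fst < snd
  nonempty_inter : (U fst ∩ U snd).Nonempty

instance [Finite ι] : Finite (NerveEdge U) :=
  Finite.of_injective (fun e => (e.fst, e.snd)) fun _ _ h =>
    NerveEdge.ext (congrArg Prod.fst h) (congrArg Prod.snd h)

namespace IsNerveCover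

theorem isPreconnected_union (hU : IsNerveCover U p) (e : NerveEdge U) :
    IsPreconnected (U e.fst ∪ U e.snd) :=
  (hU.isPreconnected _).union' e.nonempty_inter (hU.isPreconnected _)

theorem joinedIn_union [LocallyPathConnectedSpace X] (hU : IsNerveCover U p) (e : NerveEdge U) :
    JoinedIn (U e.fst ∪ U e.snd) (p e.fst) (p e.snd) := by
  have hconn : IsConnected (U e.fst ∪ U e.snd) :=
    ⟨⟨p e.fst, .inl (hU.mem _)⟩, hU.isPreconnected_union e⟩
  exact (((hU.isOpen _).union (hU.isOpen _)).isConnected_iff_isPathConnected.1 hconn).joinedIn _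
    (.inl (hU.mem _)) _ (.inr (hU.mem _))

theorem edge_unique (hU : IsNerveCover U p) {e e' : NerveEdge U} (h : x ∈ U e.fst ∩ U e.snd)
    (h' : x ∈ U e'.fst ∩ U e'.snd) : e = e' := by
  have hfst := hU.eq_or_eq e'.fst_lt_snd.ne h'.1 h'.2 h.1
  have hsnd := hU.eq_or_eq e'.fst_lt_snd.ne h'.1 h'.2 h.2
  have hlt := e.fst_lt_snd
  have hlt' := e'.fst_lt_snd
  apply NerveEdge.ext <;> grind

theorem exists_edge_or_forall_eq (hU : IsNerveCover U p) (x : X) :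
    (∃ e : NerveEdge U, x ∈ U e.fst ∩ U e.snd) ∨ ∃ i, ∀ k, x ∈ U k → k = i := by
  obtain ⟨i, hi⟩ := hU.exists_mem x
  by_cases! h : ∃ k, x ∈ U k ∧ k ≠ i
  · obtain ⟨k, hk, hki⟩ := h
    rcases hki.lt_or_gt with hlt | hlt
    · exact .inl ⟨⟨k, i, hlt, x, hk, hi⟩, hk, hi⟩
    · exact .inl ⟨⟨i, k, hlt, x, hi, hk⟩, hi, hk⟩
  · exact .inr ⟨i, h⟩

end IsNerveCover

end Nerve

section TransitionWeight

variable {X : Type*} [MetricSpace X] {A B : Set X} {x : X}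

/-- A function on `A ∪ B` with values in `[0, 1]` that vanishes off `B` and equals one off `A`; used
for open sets with nonempty complements, since `Metric.infDist x ∅ = 0`. -/
noncomputable def transitionWeight (A B : Set X) (x : X) : ℝ :=
  Metric.infDist x Bᶜ / (Metric.infDist x Aᶜ + Metric.infDist x Bᶜ)

theorem transitionWeight_of_notMem_right (hx : x ∉ B) : transitionWeight A B x = 0 := by
  rw [transitionWeight, Metric.infDist_zero_of_mem hx, zero_div]

theorem infDist_compl_pos (hA : IsOpen A) (hAne : Aᶜ.Nonempty) (hx : x ∈ A) :
    0 < Metric.infDist x Aᶜ :=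
  (hA.isClosed_compl.notMem_iff_infDist_pos hAne).1 fun h => h hx

theorem transitionWeight_of_notMem_left (hB : IsOpen B) (hBne : Bᶜ.Nonempty) (hxA : x ∉ A)
    (hxB : x ∈ B) : transitionWeight A B x = 1 := by
  rw [transitionWeight, Metric.infDist_zero_of_mem (s := Aᶜ) hxA, zero_add,
    div_self (infDist_compl_pos hB hBne hxB).ne']

theorem continuousOn_transitionWeight (hA : IsOpen A) (hB : IsOpen B) (hAne : Aᶜ.Nonempty)
    (hBne : Bᶜ.Nonempty) : ContinuousOn (transitionWeight A B) (A ∪ B) := by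
  refine ContinuousOn.div (by fun_prop) (by fun_prop) fun x hx => ne_of_gt ?_
  rcases hx with hx | hx
  · exact add_pos_of_pos_of_nonneg (infDist_compl_pos hA hAne hx) Metric.infDist_nonneg
  · exact add_pos_of_nonneg_of_pos Metric.infDist_nonneg (infDist_compl_pos hB hBne hx)

end TransitionWeight

section NerveMap

variable {X ι Z : Type*} [MetricSpace X] [LinearOrder ι] [TopologicalSpace Z] {U : ι → Set X}
  {p : ι → X} {q : ι → Z} {β : ∀ e : NerveEdge U, Path (q e.fst) (q e.snd)} {x : X} {i : ι}
  {e : NerveEdge U}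

/-- The position of a point along the edge `e` of the nerve. -/
noncomputable def NerveEdge.weight (e : NerveEdge U) : X → ℝ :=
  transitionWeight (U e.fst) (U e.snd)

namespace IsNerveCover

theorem weight_of_notMem_fst (hU : IsNerveCover U p) (hfst : x ∉ U e.fst) (hsnd : x ∈ U e.snd) :
    e.weight x = 1 :=
  transitionWeight_of_notMem_left (hU.isOpen _) (hU.compl_nonempty e.fst_lt_snd.ne') hfst hsnd

theorem continuousOn_weight (hU : IsNerveCover U p) :
    ContinuousOn e.weight (U e.fst ∪ U e.snd) :=
  continuousOn_transitionWeight (hU.isOpen _) (hU.isOpen _) (hU.compl_nonempty e.fst_lt_snd.ne)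
    (hU.compl_nonempty e.fst_lt_snd.ne')

theorem surjOn_weight (hU : IsNerveCover U p) :
    SurjOn e.weight (U e.fst ∪ U e.snd) (Icc 0 1) := by
  have hfst : e.weight (p e.fst) = 0 :=
    transitionWeight_of_notMem_right fun h => e.fst_lt_snd.ne' (hU.eq_of_mem h)
  have hsnd : e.weight (p e.snd) = 1 :=
    hU.weight_of_notMem_fst (fun h => e.fst_lt_snd.ne (hU.eq_of_mem h)) (hU.mem _)
  have hivt := (hU.isPreconnected_union e).intermediate_value (.inl (hU.mem _))
    (.inr (hU.mem _)) hU.continuousOn_weight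
  rwa [hfst, hsnd] at hivt

open Classical in
/-- The map of a space covered by `U` to a space containing the nerve of `U`, its vertices being the
points `q i` and its edges the paths `β e`. -/
noncomputable def nerveMap (hU : IsNerveCover U p) (q : ι → Z)
    (β : ∀ e : NerveEdge U, Path (q e.fst) (q e.snd)) (x : X) : Z :=
  if h : ∃ e : NerveEdge U, x ∈ U e.fst ∩ U e.snd then (β h.choose).extend (h.choose.weight x)
  else q (hU.exists_mem x).choose

theorem nerveMap_of_mem_edge (hU : IsNerveCover U p) (hx : x ∈ U e.fst ∩ U e.snd) :
    hU.nerveMap q β x = (β e).extend (e.weight x) := by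
  have h : ∃ e : NerveEdge U, x ∈ U e.fst ∩ U e.snd := ⟨e, hx⟩
  rw [nerveMap, dif_pos h, hU.edge_unique h.choose_spec hx]

theorem nerveMap_of_forall_eq (hU : IsNerveCover U p) (hx : ∀ k, x ∈ U k → k = i) :
    hU.nerveMap q β x = q i := by
  rw [nerveMap, dif_neg, hx _ (hU.exists_mem x).choose_spec]
  rintro ⟨e, hfst, hsnd⟩
  exact e.fst_lt_snd.ne ((hx _ hfst).trans (hx _ hsnd).symm)

theorem nerveMap_apply_vertex (hU : IsNerveCover U p) (i : ι) : hU.nerveMap q β (p i) = q i :=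
  hU.nerveMap_of_forall_eq fun _ => hU.eq_of_mem

theorem nerveMap_of_forall_eq_or_eq (hU : IsNerveCover U p)
    (hx : ∀ k, x ∈ U k → k = e.fst ∨ k = e.snd) :
    hU.nerveMap q β x = (β e).extend (e.weight x) := by
  by_cases hfst : x ∈ U e.fst <;> by_cases hsnd : x ∈ U e.snd
  · exact hU.nerveMap_of_mem_edge ⟨hfst, hsnd⟩
  · rw [NerveEdge.weight, transitionWeight_of_notMem_right hsnd, Path.extend_zero]
    exact hU.nerveMap_of_forall_eq fun k hk => (hx k hk).resolve_right fun h => hsnd (h ▸ hk)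
  · rw [hU.weight_of_notMem_fst hfst hsnd, Path.extend_one]
    exact hU.nerveMap_of_forall_eq fun k hk => (hx k hk).resolve_left fun h => hfst (h ▸ hk)
  · obtain ⟨k, hk⟩ := hU.exists_mem x
    rcases hx k hk with rfl | rfl <;> contradiction

theorem continuous_nerveMap [Finite ι] (hU : IsNerveCover U p) :
    Continuous (hU.nerveMap q β) := by
  let F : ι ⊕ NerveEdge U → Set X := Sum.elim (fun i => {x | ∀ k, x ∈ U k → k = i})
    fun e => {x | ∀ k, x ∈ U k → k = e.fst ∨ k = e.snd}
  refine (locallyFinite_of_finite F).continuous ?_ ?_ ?_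
  · refine eq_univ_of_forall fun x => mem_iUnion.2 ?_
    rcases hU.exists_edge_or_forall_eq x with ⟨e, he⟩ | ⟨i, hi⟩
    · exact ⟨.inr e, fun k => hU.eq_or_eq e.fst_lt_snd.ne he.1 he.2⟩
    · exact ⟨.inl i, hi⟩
  · have hclosed (P : ι → Prop) : IsClosed {x | ∀ k, x ∈ U k → P k} := by
      simp only [ofPred_forall, imp_iff_not_or, ofPred_or]
      exact isClosed_iInter fun k => (hU.isOpen k).isClosed_compl.union isClosed_const
    rintro (i | e) <;> exact hclosed _
  · rintro (i | e)
    · exact continuousOn_const.congr fun x hx => hU.nerveMap_of_forall_eq hx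
    · refine ContinuousOn.congr ((β e).continuous_extend.comp_continuousOn
        (hU.continuousOn_weight.mono fun x hx => ?_)) fun x hx => hU.nerveMap_of_forall_eq_or_eq hx
      obtain ⟨k, hk⟩ := hU.exists_mem x
      rcases hx k hk with rfl | rfl
      exacts [.inl hk, .inr hk]

theorem nerveMap_eq_vertex_or_mem_edge (hU : IsNerveCover U p) (x : X) :
    (∃ i, x ∈ U i ∧ hU.nerveMap q β x = q i) ∨
      ∃ e, x ∈ U e.fst ∩ U e.snd ∧ hU.nerveMap q β x ∈ range (β e) := by
  rcases hU.exists_edge_or_forall_eq x with ⟨e, he⟩ | ⟨i, hi⟩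
  · refine .inr ⟨e, he, ?_⟩
    rw [hU.nerveMap_of_mem_edge he, ← Path.extend_range]
    exact mem_range_self _
  · exact .inl ⟨i, hU.mem_of_forall_eq hi, hU.nerveMap_of_forall_eq hi⟩

theorem range_subset_range_nerveMap (hU : IsNerveCover U p) (e : NerveEdge U) :
    range (β e) ⊆ range (hU.nerveMap q β) := by
  rintro _ ⟨t, rfl⟩
  obtain ⟨x, hx, hxt⟩ := hU.surjOn_weight (e := e) t.2
  rw [← (β e).extend_apply t.2, ← hxt]
  by_cases hfst : x ∈ U e.fst <;> by_cases hsnd : x ∈ U e.snd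
  · exact ⟨x, hU.nerveMap_of_mem_edge ⟨hfst, hsnd⟩⟩
  · rw [NerveEdge.weight, transitionWeight_of_notMem_right hsnd, Path.extend_zero]
    exact ⟨p e.fst, hU.nerveMap_apply_vertex _⟩
  · rw [hU.weight_of_notMem_fst hfst hsnd, Path.extend_one]
    exact ⟨p e.snd, hU.nerveMap_apply_vertex _⟩
  · exact absurd hx (not_or.2 ⟨hfst, hsnd⟩)

theorem range_nerveMap (hU : IsNerveCover U p) :
    range (hU.nerveMap q β) = range q ∪ ⋃ e, range (β e) := by
  refine subset_antisymm ?_ (union_subset ?_ (iUnion_subset hU.range_subset_range_nerveMap))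
  · rintro _ ⟨x, rfl⟩
    rcases hU.nerveMap_eq_vertex_or_mem_edge (q := q) (β := β) x with ⟨i, -, hi⟩ | ⟨e, -, he⟩
    · exact .inl ⟨i, hi.symm⟩
    · exact .inr (mem_iUnion_of_mem e he)
  · rintro _ ⟨i, rfl⟩
    exact ⟨p i, hU.nerveMap_apply_vertex i⟩

theorem dist_nerveMap_lt {r η : ℝ} (hU : IsNerveCover U p)
    (hsmall : ∀ i, ∀ x ∈ U i, ∀ y ∈ U i, dist x y < r)
    {β : ∀ e : NerveEdge U, Path (p e.fst) (p e.snd)}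
    (hβ : ∀ e, range (β e) ⊆ Metric.thickening η (U e.fst ∪ U e.snd)) (hη : 0 < η) (x : X) :
    dist x (hU.nerveMap p β x) < r + η := by
  rcases hU.nerveMap_eq_vertex_or_mem_edge (β := β) x with ⟨i, hi, hx⟩ | ⟨e, he, hx⟩
  · rw [hx]
    exact (hsmall i x hi _ (hU.mem i)).trans (lt_add_of_pos_right r hη)
  · obtain ⟨y, hy, hdist⟩ := Metric.mem_thickening_iff.1 (hβ e hx)
    have hxy : dist x y < r := hy.elim (hsmall _ x he.1 y) (hsmall _ x he.2 y)
    exact (dist_triangle_right _ _ y).trans_lt (add_lt_add hxy hdist)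

end IsNerveCover

end NerveMap

theorem stmt_15_general {X : Type*} [MetricSpace X] [CompactSpace X] [LocallyConnectedSpace X]
    (hdim : CovDimLE X 1) (ε : ℝ) (hε : 0 < ε) :
    ∃ (Y : Set X) (f : X → X), IsFiniteTopGraph Y ∧ Continuous f ∧
      Set.range f = Y ∧ ∀ x : X, dist x (f x) < ε := by
  have := locallyPathConnectedSpace_of_locallyConnectedSpace (X := X)
  obtain ⟨m, U, p, hU, hsmall⟩ := hdim.exists_isNerveCover (half_pos hε)
  obtain ⟨β, hgraph, hβ⟩ := exists_paths_isFiniteTopGraph (ι := NerveEdge U) (finite_range p)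
    (fun e => mem_range_self e.fst) (fun e => mem_range_self e.snd) hU.joinedIn_union (half_pos hε)
  refine ⟨_, hU.nerveMap p β, hgraph, hU.continuous_nerveMap, hU.range_nerveMap, fun x => ?_⟩
  exact (hU.dist_nerveMap_lt hsmall hβ (half_pos hε) x).trans_eq (add_halves ε)

/-- A one-dimensional Peano continuum is approximated from within by finite subgraphs. -/
theorem stmt_15 {X : Type} [MetricSpace X] [CompactSpace X] [ConnectedSpace X]
    [LocallyConnectedSpace X] (hdim : CovDimLE X 1)
    (ε : ℝ) (hε : 0 < ε) :
    ∃ (Y : Set X) (f : X → X), IsFiniteTopGraph Y ∧ Continuous f ∧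
      Set.range f = Y ∧ ∀ x : X, dist x (f x) < ε :=
  stmt_15_general hdim ε hε
end
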